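/- Let U′ ⊂ U ⊂ ℂ be hyperbolic open sets and let f:U′→U be a holomorphic covering map. Let 𝒲 be the set of all points of U′ that have an open neighborhood W with fⁿ(W) ⊂ U′ for all n ≥ 0. Then: (1) for every w ∈ 𝒲, d_U(fⁿ(w), U∖𝒲) → ∞ as n → ∞. (2) If W is the connected component of 𝒲 containing w, and f^{n_k}|_W → z₀ locally uniformly for some sequence n_k → ∞ and some z₀ ∈ ℂ, then z₀ ∈ ℂ∖U; moreover, if z₀ is an isolated point of ℂ∖U, then for all sufficiently large k the set f^{n_k}(W) ∪ {z₀} is simply connected, and there exists p ≥ 1 such that f^p extends holomorphically to z₀ with f^p(z₀) = z₀ and (f^p)′(z₀) = 0. -/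

import Mathlib

open Set Metric Filter Topology

open scoped ENNReal

/-- `π` is a holomorphic covering map from the unit disc onto `C ⊆ ℂ`. -/
def IsDiscCovering (π : ℂ → ℂ) (C : Set ℂ) : Prop :=
  DifferentiableOn ℂ π (ball (0 : ℂ) 1) ∧ π '' ball (0 : ℂ) 1 = C ∧
    ∃ h : MapsTo π (ball (0 : ℂ) 1) C,
      IsCoveringMap (MapsTo.restrict π (ball (0 : ℂ) 1) C h)

/-- `ρ` is the density of the hyperbolic metric of the open set `U ⊆ ℂ`: on each connected
component it is the pushforward of the Poincaré density `2/(1 − |ζ|²)` of the unit disc under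
a holomorphic universal covering map. -/
def IsHypDensity (U : Set ℂ) (ρ : ℂ → ℝ) : Prop :=
  ∀ z ∈ U, ∃ π : ℂ → ℂ, IsDiscCovering π (connectedComponentIn U z) ∧
    ∀ ζ ∈ ball (0 : ℂ) 1, ρ (π ζ) * ‖deriv π ζ‖ = 2 / (1 - ‖ζ‖ ^ 2)

/-- The length of a curve `γ : [0,1] → ℂ` with respect to the conformal density `ρ`. -/
noncomputable def hypLength (ρ : ℂ → ℝ) (γ : ℝ → ℂ) : ℝ :=
  ∫ t in (0 : ℝ)..1, ρ (γ t) * ‖deriv γ t‖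

/-- The hyperbolic distance in `U` with density `ρ`: the infimum of hyperbolic lengths of
(C¹-smooth) curves joining `z` and `w` within `U` (`∞` if there is no such curve). -/
noncomputable def hypDist (U : Set ℂ) (ρ : ℂ → ℝ) (z w : ℂ) : ℝ≥0∞ :=
  ⨅ (γ : ℝ → ℂ) (_ : ContDiffOn ℝ 1 γ (Icc (0 : ℝ) 1) ∧
      (∀ t ∈ Icc (0 : ℝ) 1, γ t ∈ U) ∧ γ 0 = z ∧ γ 1 = w),
    ENNReal.ofReal (hypLength ρ γ)

/-- The hyperbolic distance from a point to a set: `d_U(z, ∅) = ∞`. -/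
noncomputable def hypDistToSet (U : Set ℂ) (ρ : ℂ → ℝ) (z : ℂ) (E : Set ℂ) : ℝ≥0∞ :=
  ⨅ e ∈ E, hypDist U ρ z e

/-- A hyperbolic open subset of `ℂ`: each connected component omits at least two points. -/
def HyperbolicOpen (U : Set ℂ) : Prop :=
  IsOpen U ∧ ∀ z ∈ U, Set.Nontrivial (connectedComponentIn U z)ᶜ

/-- A holomorphic map `F : X → Y` between open subsets of the plane with unique lifting of
holomorphic maps defined on convex open sets. -/
structure LiftsHol (F : ℂ → ℂ) (X Y : Set ℂ) : Prop where
  isOpen : IsOpen X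
  mapsTo : MapsTo F X Y
  differentiableOn : DifferentiableOn ℂ F X
  exists_lift : ∀ S : Set ℂ, Convex ℝ S → IsOpen S → ∀ g : ℂ → ℂ, DifferentiableOn ℂ g S →
    MapsTo g S Y → ∀ s ∈ S, ∀ x ∈ X, F x = g s →
    ∃ G : ℂ → ℂ, DifferentiableOn ℂ G S ∧ MapsTo G S X ∧ G s = x ∧ ∀ t ∈ S, F (G t) = g t
  eqOn : ∀ S : Set ℂ, IsPreconnected S → ∀ G₁ G₂ : ℂ → ℂ, ContinuousOn G₁ S → ContinuousOn G₂ S →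
    MapsTo G₁ S X → MapsTo G₂ S X → (∀ t ∈ S, F (G₁ t) = F (G₂ t)) →
    ∀ s ∈ S, G₁ s = G₂ s → EqOn G₁ G₂ S

theorem IsCoveringMap.exists_continuousOn_lift {F : ℂ → ℂ} {X Y : Set ℂ} {h : MapsTo F X Y}
    (hc : IsCoveringMap (MapsTo.restrict F X Y h)) {S : Set ℂ} (hS : Convex ℝ S) (hSo : IsOpen S)
    {g : ℂ → ℂ} (hg : ContinuousOn g S) (hgY : MapsTo g S Y) {s x : ℂ} (hs : s ∈ S) (hx : x ∈ X)
    (hsx : F x = g s) :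
    ∃ G : ℂ → ℂ, ContinuousOn G S ∧ MapsTo G S X ∧ G s = x ∧ ∀ t ∈ S, F (G t) = g t := by
  have : ContractibleSpace S := hS.contractibleSpace ⟨s, hs⟩
  have : LocallyPathConnectedSpace S := hSo.locallyPathConnectedSpace
  obtain ⟨G, ⟨hG0, hG⟩, -⟩ := hc.existsUnique_continuousMap_lifts
    ⟨MapsTo.restrict g S Y hgY, hg.mapsToRestrict hgY⟩ ⟨s, hs⟩ ⟨x, hx⟩
    (Subtype.ext hsx)
  classical
  refine ⟨fun t ↦ if ht : t ∈ S then G ⟨t, ht⟩ else 0, ?_, fun t ht ↦ ?_, ?_, fun t ht ↦ ?_⟩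
  · rw [continuousOn_iff_continuous_domRestrict]
    convert continuous_subtype_val.comp G.continuous using 1
    ext t
    simp
  · simp [ht]
  · simp [hs, hG0]
  · have := congrArg Subtype.val (congrFun hG ⟨t, ht⟩)
    simpa [ht] using this

theorem IsCoveringMap.eqOn_of_restrict {F : ℂ → ℂ} {X Y : Set ℂ} {h : MapsTo F X Y}
    (hc : IsCoveringMap (MapsTo.restrict F X Y h)) {S : Set ℂ} (hS : IsPreconnected S)
    {G₁ G₂ : ℂ → ℂ} (h₁ : ContinuousOn G₁ S) (h₂ : ContinuousOn G₂ S)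
    (m₁ : MapsTo G₁ S X) (m₂ : MapsTo G₂ S X) (he : ∀ t ∈ S, F (G₁ t) = F (G₂ t)) {s : ℂ}
    (hs : s ∈ S) (hs' : G₁ s = G₂ s) : EqOn G₁ G₂ S := by
  have : PreconnectedSpace S := Subtype.preconnectedSpace hS
  have := hc.eq_of_comp_eq (h₁.mapsToRestrict m₁) (h₂.mapsToRestrict m₂)
    (by ext t; exact he t t.2) ⟨s, hs⟩ (Subtype.ext hs')
  intro t ht
  exact congrArg Subtype.val (congrFun this ⟨t, ht⟩)

theorem IsCoveringMap.deriv_ne_zero {F : ℂ → ℂ} {X Y : Set ℂ} (hX : IsOpen X)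
    (hY : IsOpen Y) {h : MapsTo F X Y} (hc : IsCoveringMap (MapsTo.restrict F X Y h))
    (hF : DifferentiableOn ℂ F X) {x : ℂ} (hx : x ∈ X) : deriv F x ≠ 0 := by
  obtain ⟨ε, hε, hball⟩ := Metric.isOpen_iff.1 hY (F x) (h hx)
  obtain ⟨G, hG, hGX, hGs, hGe⟩ := hc.exists_continuousOn_lift (convex_ball (F x) ε) isOpen_ball
    continuousOn_id hball (mem_ball_self hε) hx rfl
  simp only [id] at hGe
  have hN : ball (F x) ε ∈ 𝓝 (F x) := ball_mem_nhds _ hε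
  have hGc : ContinuousAt G (F x) := hG.continuousAt hN
  have hGt : Tendsto G (𝓝 (F x)) (𝓝 x) := by
    have := hGc.tendsto
    rwa [show G (F x) = x from hGs] at this
  have hGt' : Tendsto G (𝓝[≠] (F x)) (𝓝[≠] x) := by
    refine tendsto_nhdsWithin_iff.2 ⟨hGt.mono_left nhdsWithin_le_nhds, ?_⟩
    filter_upwards [nhdsWithin_le_nhds hN, self_mem_nhdsWithin] with t ht htn heq
    have h1 := hGe t ht
    rw [show G t = x from heq] at h1
    exact htn h1.symm
  have hxX := hX.mem_nhds hx
  have hFa : AnalyticAt ℂ F x := hF.analyticAt hxX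
  have hGd : DifferentiableAt ℂ G (F x) := by
    rcases hFa.deriv.eventually_eq_zero_or_eventually_ne_zero with h0 | h0
    · exfalso
      obtain ⟨δ, hδ, hsub⟩ := Metric.eventually_nhds_iff_ball.1
        (h0.and hFa.eventually_analyticAt)
      have hconst : ∀ y ∈ ball x δ, F y = F x := fun y hy ↦
        isOpen_ball.is_const_of_deriv_eq_zero (convex_ball x δ).isPreconnected
          (fun z hz ↦ (hsub z hz).2.differentiableAt.differentiableWithinAt)
          (fun z hz ↦ (hsub z hz).1) hy (mem_ball_self hδ)
      have h1 : ∀ᶠ t in 𝓝[≠] (F x), False := by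
        filter_upwards [nhdsWithin_le_nhds hN, self_mem_nhdsWithin,
          nhdsWithin_le_nhds (hGt (ball_mem_nhds x hδ))] with t ht htn htb
        exact htn ((hGe t ht).symm.trans (hconst _ htb))
      exact h1.exists.choose_spec
    · refine (Complex.analyticAt_of_differentiable_on_punctured_nhds_of_continuousAt ?_
        hGc).differentiableAt
      filter_upwards [nhdsWithin_le_nhds (eventually_mem_nhds_iff.2 hN), hGt'.eventually h0]
        with t ht htd
      have hGtX := hGX (mem_of_mem_nhds ht)
      exact (HasDerivAt.of_comp_left (hG.continuousAt ht)
        (hF.differentiableAt (hX.mem_nhds hGtX)).hasDerivAt (hasDerivAt_id t) htd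
        (by filter_upwards [ht] with u hu using hGe u hu)).differentiableAt
  intro h0
  have h1 : HasDerivAt F (deriv F x) (G (F x)) := by
    rw [show G (F x) = x from hGs]
    exact (hF.differentiableAt hxX).hasDerivAt
  have h2 := h1.comp (F x) hGd.hasDerivAt
  have h3 : HasDerivAt (F ∘ G) 1 (F x) := (hasDerivAt_id (F x)).congr_of_eventuallyEq
    (by filter_upwards [hN] with u hu using hGe u hu)
  simpa [h0] using h2.unique h3

theorem liftsHol_of_isCoveringMap {F : ℂ → ℂ} {X Y : Set ℂ} (hX : IsOpen X) (hY : IsOpen Y)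
    {h : MapsTo F X Y} (hc : IsCoveringMap (MapsTo.restrict F X Y h))
    (hF : DifferentiableOn ℂ F X) : LiftsHol F X Y := by
  refine ⟨hX, h, hF, ?_, fun S hS G₁ G₂ h₁ h₂ m₁ m₂ he s hs hs' ↦
    hc.eqOn_of_restrict hS h₁ h₂ m₁ m₂ he hs hs'⟩
  intro S hS hSo g hg hgY s hs x hx hsx
  obtain ⟨G, hG, hGX, hGs, hGe⟩ := hc.exists_continuousOn_lift hS hSo hg.continuousOn hgY hs hx hsx
  refine ⟨G, fun t ht ↦ ?_, hGX, hGs, hGe⟩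
  have hF' := (hF.differentiableAt (hX.mem_nhds (hGX ht))).hasDerivAt
  exact (HasDerivAt.of_comp_left (hG.continuousAt (hSo.mem_nhds ht)) hF'
    (hg.differentiableAt (hSo.mem_nhds ht)).hasDerivAt
    (hc.deriv_ne_zero hX hY hF (hGX ht))
    (by filter_upwards [hSo.mem_nhds ht] with u hu using hGe u hu)).differentiableAt.differentiableWithinAt

namespace LiftsHol

variable {F K : ℂ → ℂ} {X Y Z : Set ℂ}

theorem deriv_ne_zero (hF : LiftsHol F X Y) (hY : IsOpen Y) {x : ℂ} (hx : x ∈ X) :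
    deriv F x ≠ 0 := by
  obtain ⟨ε, hε, hball⟩ := Metric.isOpen_iff.1 hY (F x) (hF.mapsTo hx)
  obtain ⟨G, hG, hGX, hGs, hGe⟩ := hF.exists_lift (ball (F x) ε) (convex_ball (F x) ε) isOpen_ball
    id differentiableOn_id hball (F x) (mem_ball_self hε) x hx rfl
  have hN : ball (F x) ε ∈ 𝓝 (F x) := ball_mem_nhds _ hε
  intro h0
  have h1 : HasDerivAt F (deriv F x) (G (F x)) := by
    rw [hGs]
    exact (hF.differentiableOn.differentiableAt (hF.isOpen.mem_nhds hx)).hasDerivAt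
  have h2 := h1.comp (F x) (hG.differentiableAt hN).hasDerivAt
  have h3 : HasDerivAt (F ∘ G) 1 (F x) := (hasDerivAt_id (F x)).congr_of_eventuallyEq
    (by filter_upwards [hN] with u hu using hGe u hu)
  simpa [h0] using h2.unique h3

theorem restrict (hF : LiftsHol F X Y) {Y' : Set ℂ} (hY' : IsOpen Y') (hYY : Y' ⊆ Y) :
    LiftsHol F (X ∩ F ⁻¹' Y') Y' where
  isOpen := hF.differentiableOn.continuousOn.isOpen_inter_preimage hF.isOpen hY'
  mapsTo := fun _ hx ↦ hx.2
  differentiableOn := hF.differentiableOn.mono inter_subset_left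
  exists_lift := by
    intro S hS hSo g hg hgY s hs x hx hsx
    obtain ⟨G, hG, hGX, hGs, hGe⟩ := hF.exists_lift S hS hSo g hg (hgY.mono_right hYY) s hs x hx.1 hsx
    refine ⟨G, hG, fun t ht ↦ ⟨hGX ht, ?_⟩, hGs, hGe⟩
    rw [mem_preimage, hGe t ht]
    exact hgY ht
  eqOn := fun S hS G₁ G₂ h₁ h₂ m₁ m₂ ↦ hF.eqOn S hS G₁ G₂ h₁ h₂
    (m₁.mono_right inter_subset_left) (m₂.mono_right inter_subset_left)

theorem comp (hK : LiftsHol K Y Z) (hF : LiftsHol F X Y) : LiftsHol (K ∘ F) X Z where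
  isOpen := hF.isOpen
  mapsTo := hK.mapsTo.comp hF.mapsTo
  differentiableOn := hK.differentiableOn.comp hF.differentiableOn hF.mapsTo
  exists_lift := by
    intro S hS hSo g hg hgY s hs x hx hsx
    obtain ⟨G, hG, hGY, hGs, hGe⟩ := hK.exists_lift S hS hSo g hg hgY s hs (F x) (hF.mapsTo hx) hsx
    obtain ⟨H, hH, hHX, hHs, hHe⟩ := hF.exists_lift S hS hSo G hG hGY s hs x hx hGs.symm
    exact ⟨H, hH, hHX, hHs, fun t ht ↦ by rw [Function.comp, hHe t ht, hGe t ht]⟩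
  eqOn := by
    intro S hS G₁ G₂ h₁ h₂ m₁ m₂ he s hs hs'
    refine hF.eqOn S hS G₁ G₂ h₁ h₂ m₁ m₂ ?_ s hs hs'
    exact hK.eqOn S hS _ _ (hF.differentiableOn.continuousOn.comp h₁ m₁)
      (hF.differentiableOn.continuousOn.comp h₂ m₂) (hF.mapsTo.comp m₁) (hF.mapsTo.comp m₂) he s hs
      (congrArg F hs')

theorem mono_of_preconnected (hF : LiftsHol F X Y) {Y' : Set ℂ}
    (h : ∀ S : Set ℂ, IsPreconnected S → S ⊆ Y' → (S ∩ F '' X).Nonempty → S ⊆ Y) 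
    (hm : MapsTo F X Y') : LiftsHol F X Y' where
  isOpen := hF.isOpen
  mapsTo := hm
  differentiableOn := hF.differentiableOn
  exists_lift := by
    intro S hS hSo g hg hgY s hs x hx hsx
    refine hF.exists_lift S hS hSo g hg (mapsTo_iff_image_subset.2 <| h _ (hS.isPreconnected.image g hg.continuousOn)
      hgY.image_subset ⟨g s, mem_image_of_mem g hs, x, hx, hsx⟩) s hs x hx hsx
  eqOn := hF.eqOn

theorem precomp (hF : LiftsHol F X Y) {T : ℂ → ℂ} {X' : Set ℂ} {T' : ℂ → ℂ} (hX' : IsOpen X')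
    (hT : DifferentiableOn ℂ T X') (hT' : DifferentiableOn ℂ T' X) (h : MapsTo T X' X)
    (h' : MapsTo T' X X') (hinv : ∀ x ∈ X', T' (T x) = x) (hinv' : ∀ x ∈ X, T (T' x) = x) :
    LiftsHol (F ∘ T) X' Y := by
  refine hF.comp ⟨hX', h, hT, ?_, ?_⟩
  · intro S hS hSo g hg hgY s hs x hx hsx
    exact ⟨T' ∘ g, hT'.comp hg hgY, h'.comp hgY, by simp [← hsx, hinv x hx],
      fun t ht ↦ hinv' _ (hgY ht)⟩
  · intro S hS G₁ G₂ h₁ h₂ m₁ m₂ he s hs hs' t ht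
    rw [← hinv _ (m₁ ht), ← hinv _ (m₂ ht), he t ht]

end LiftsHol

theorem liftsHol_exp : LiftsHol Complex.exp univ {0}ᶜ := by
  have hc : IsCoveringMap (MapsTo.restrict Complex.exp univ {0}ᶜ
      (fun z _ ↦ Complex.exp_ne_zero z)) := by
    exact Complex.isCoveringMap_exp.comp_homeomorph (Homeomorph.Set.univ ℂ)
  exact liftsHol_of_isCoveringMap isOpen_univ isOpen_compl_singleton hc
    Complex.differentiable_exp.differentiableOn

/-- The set of points of `U` whose first `n` iterates under `f : U' → U` are defined. -/
def iterDomain (f : ℂ → ℂ) (U' U : Set ℂ) : ℕ → Set ℂ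
  | 0 => U
  | n + 1 => U' ∩ f ⁻¹' iterDomain f U' U n

theorem mem_iterDomain {f : ℂ → ℂ} {U' U : Set ℂ} (hf : MapsTo f U' U) (hsub : U' ⊆ U) {n : ℕ} {z : ℂ} :
    z ∈ iterDomain f U' U n ↔ z ∈ U ∧ ∀ i < n, f^[i] z ∈ U' := by
  induction n generalizing z with
  | zero => simp [iterDomain]
  | succ n ih =>
    simp only [iterDomain, mem_inter_iff, mem_preimage, ih]
    constructor
    · rintro ⟨h1, -, h2⟩
      refine ⟨hsub h1, fun i hi ↦ ?_⟩
      cases i with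
      | zero => exact h1
      | succ i => exact h2 i (by lia)
    · rintro ⟨h1, h2⟩
      have := h2 0 (by lia)
      exact ⟨this, hf this, fun i hi ↦ h2 (i + 1) (by lia)⟩

theorem iterDomain_subset {f : ℂ → ℂ} {U' U : Set ℂ} (hf : MapsTo f U' U) (hsub : U' ⊆ U) (n : ℕ) :
    iterDomain f U' U n ⊆ U := fun _ hz ↦ ((mem_iterDomain hf hsub).1 hz).1

theorem LiftsHol.iterate {f : ℂ → ℂ} {U' U : Set ℂ} (hU : IsOpen U) (hf : LiftsHol f U' U) (hsub : U' ⊆ U) (n : ℕ) :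
    LiftsHol f^[n] (iterDomain f U' U n) U := by
  induction n with
  | zero =>
    refine ⟨hU, mapsTo_id U, differentiableOn_id, ?_, ?_⟩
    · intro S hS hSo g hg hgY s hs x hx hsx
      exact ⟨g, hg, hgY, hsx.symm, fun _ _ ↦ rfl⟩
    · intro S hS G₁ G₂ h₁ h₂ m₁ m₂ he s hs hs' t ht
      exact he t ht
  | succ n ih => exact ih.comp (hf.restrict ih.isOpen (iterDomain_subset hf.mapsTo hsub n))

/-- The holomorphic involution of the unit disc exchanging `0` and `a`. -/
noncomputable def discInvolution (a ζ : ℂ) : ℂ := (a - ζ) / (1 - (starRingEnd ℂ) a * ζ)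

section DiscInvolution

variable {a ζ : ℂ}

theorem one_sub_conj_mul_ne_zero (ha : ‖a‖ < 1) (hζ : ‖ζ‖ < 1) :
    1 - (starRingEnd ℂ) a * ζ ≠ 0 := by
  intro h
  have h1 : ‖(starRingEnd ℂ) a * ζ‖ = 1 := by rw [← sub_eq_zero.1 h, norm_one]
  rw [norm_mul, RCLike.norm_conj] at h1
  nlinarith [norm_nonneg a, norm_nonneg ζ]

theorem one_sub_norm_discInvolution_sq (ha : ‖a‖ < 1) (hζ : ‖ζ‖ < 1) :
    1 - ‖discInvolution a ζ‖ ^ 2 =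
      (1 - ‖a‖ ^ 2) * (1 - ‖ζ‖ ^ 2) / ‖1 - (starRingEnd ℂ) a * ζ‖ ^ 2 := by
  have h0 := one_sub_conj_mul_ne_zero ha hζ
  have h1 : ‖1 - (starRingEnd ℂ) a * ζ‖ ^ 2 ≠ 0 := by simpa using h0
  rw [discInvolution, norm_div, div_pow, eq_div_iff h1, sub_mul, div_mul_cancel₀ _ h1]
  simp only [← Complex.normSq_eq_norm_sq, Complex.normSq_apply]
  simp
  ring

theorem norm_discInvolution_lt_one (ha : ‖a‖ < 1) (hζ : ‖ζ‖ < 1) : ‖discInvolution a ζ‖ < 1 := by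
  have h0 := one_sub_conj_mul_ne_zero ha hζ
  have h1 : 0 < ‖1 - (starRingEnd ℂ) a * ζ‖ ^ 2 := by positivity
  have h2 := one_sub_norm_discInvolution_sq ha hζ
  have h3 : 0 < (1 - ‖a‖ ^ 2) * (1 - ‖ζ‖ ^ 2) / ‖1 - (starRingEnd ℂ) a * ζ‖ ^ 2 := by
    have : 0 < 1 - ‖a‖ ^ 2 := by nlinarith [norm_nonneg a]
    have : 0 < 1 - ‖ζ‖ ^ 2 := by nlinarith [norm_nonneg ζ]
    positivity
  nlinarith [norm_nonneg (discInvolution a ζ)]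

theorem discInvolution_discInvolution (ha : ‖a‖ < 1) (hζ : ‖ζ‖ < 1) :
    discInvolution a (discInvolution a ζ) = ζ := by
  have h0 := one_sub_conj_mul_ne_zero ha hζ
  have h2 := one_sub_conj_mul_ne_zero ha (norm_discInvolution_lt_one ha hζ)
  have h1 : discInvolution a ζ * (1 - (starRingEnd ℂ) a * ζ) = a - ζ := div_mul_cancel₀ _ h0
  rw [discInvolution, div_eq_iff h2]
  linear_combination -h1

theorem hasDerivAt_discInvolution (ha : ‖a‖ < 1) (hζ : ‖ζ‖ < 1) :
    HasDerivAt (discInvolution a)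
      (-(1 - (starRingEnd ℂ) a * a) / (1 - (starRingEnd ℂ) a * ζ) ^ 2) ζ := by
  have h0 := one_sub_conj_mul_ne_zero ha hζ
  have h1 := ((hasDerivAt_id ζ).const_sub a).fun_div
    (((hasDerivAt_id ζ).const_mul ((starRingEnd ℂ) a)).const_sub 1) h0
  refine h1.congr_deriv ?_
  simp only [id]
  ring

theorem differentiableOn_discInvolution (ha : ‖a‖ < 1) :
    DifferentiableOn ℂ (discInvolution a) (ball 0 1) := fun _ hζ ↦
  (hasDerivAt_discInvolution ha
    (mem_ball_zero_iff.1 hζ)).differentiableAt.differentiableWithinAt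

theorem mapsTo_discInvolution (ha : ‖a‖ < 1) :
    MapsTo (discInvolution a) (ball 0 1) (ball 0 1) := fun _ hζ ↦
  mem_ball_zero_iff.2 (norm_discInvolution_lt_one ha (mem_ball_zero_iff.1 hζ))

theorem norm_deriv_discInvolution (ha : ‖a‖ < 1) (hζ : ‖ζ‖ < 1) :
    ‖deriv (discInvolution a) ζ‖ * (1 - ‖ζ‖ ^ 2) = 1 - ‖discInvolution a ζ‖ ^ 2 := by
  rw [(hasDerivAt_discInvolution ha hζ).deriv, one_sub_norm_discInvolution_sq ha hζ, norm_div,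
    norm_neg, norm_pow]
  have : ‖1 - (starRingEnd ℂ) a * a‖ = 1 - ‖a‖ ^ 2 := by
    rw [mul_comm, Complex.mul_conj, Complex.normSq_eq_norm_sq]
    norm_cast
    rw [Real.norm_eq_abs, abs_of_nonneg]
    nlinarith [norm_nonneg a]
  rw [this]
  ring

@[simp] theorem discInvolution_zero : discInvolution a 0 = a := by simp [discInvolution]

@[simp] theorem discInvolution_self : discInvolution a a = 0 := by simp [discInvolution]

end DiscInvolution

/-- `ψ` is a holomorphic covering of a component of `U` by the unit disc, centred at `z`. -/
structure CenteredCover (U : Set ℂ) (ρ : ℂ → ℝ) (z : ℂ) (ψ : ℂ → ℂ) : Prop where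
  apply_zero : ψ 0 = z
  liftsHol : LiftsHol ψ (ball 0 1) U
  density : ∀ ζ ∈ ball (0 : ℂ) 1, ρ (ψ ζ) * ‖deriv ψ ζ‖ = 2 / (1 - ‖ζ‖ ^ 2)
  exists_path_lift : ∀ γ : ℝ → ℂ, ContinuousOn γ (Icc 0 1) → (∀ t ∈ Icc (0 : ℝ) 1, γ t ∈ U) → γ 0 = z →
    ∃ Γ : ℝ → ℂ, ContinuousOn Γ (Icc 0 1) ∧ MapsTo Γ (Icc 0 1) (ball 0 1) ∧ Γ 0 = 0 ∧
      ∀ t ∈ Icc (0 : ℝ) 1, ψ (Γ t) = γ t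

theorem IsCoveringMap.exists_path_lift_restrict {F : ℂ → ℂ} {X Y : Set ℂ} {h : MapsTo F X Y}
    (hc : IsCoveringMap (MapsTo.restrict F X Y h)) {γ : ℝ → ℂ} (hγ : ContinuousOn γ (Icc 0 1))
    (hm : MapsTo γ (Icc 0 1) Y) {x : ℂ} (hx : x ∈ X) (hsx : F x = γ 0) :
    ∃ Γ : ℝ → ℂ, ContinuousOn Γ (Icc 0 1) ∧ MapsTo Γ (Icc 0 1) X ∧ Γ 0 = x ∧
      ∀ t ∈ Icc (0 : ℝ) 1, F (Γ t) = γ t := by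
  let g : C(unitInterval, Y) := ⟨MapsTo.restrict γ (Icc 0 1) Y hm, hγ.mapsToRestrict hm⟩
  have hg0 : g 0 = MapsTo.restrict F X Y h ⟨x, hx⟩ := Subtype.ext hsx.symm
  obtain ⟨G, hG, hG0⟩ := hc.exists_path_lifts g ⟨x, hx⟩ hg0
  classical
  refine ⟨fun t ↦ if ht : t ∈ Icc (0 : ℝ) 1 then G ⟨t, ht⟩ else 0, ?_, fun t ht ↦ ?_, ?_,
    fun t ht ↦ ?_⟩
  · rw [continuousOn_iff_continuous_domRestrict]
    convert continuous_subtype_val.comp G.continuous using 1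
    ext t
    exact dif_pos t.2
  · simp only [dif_pos ht]
    exact (G _).2
  · simpa using congrArg Subtype.val hG0
  · have := congrArg Subtype.val (congrFun hG ⟨t, ht⟩)
    simp only [dif_pos ht]
    exact this

theorem IsHypDensity.exists_centeredCover {U : Set ℂ} (hU : IsOpen U) {ρ : ℂ → ℝ}
    (hρ : IsHypDensity U ρ) {z : ℂ} (hz : z ∈ U) : ∃ ψ, CenteredCover U ρ z ψ := by
  obtain ⟨π, ⟨hd, him, hm, hc⟩, hdens⟩ := hρ z hz
  have hL0 := liftsHol_of_isCoveringMap isOpen_ball hU.connectedComponentIn hc hd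
  have hzC : z ∈ connectedComponentIn U z := mem_connectedComponentIn hz
  have hCU : connectedComponentIn U z ⊆ U := connectedComponentIn_subset U z
  have hL : LiftsHol π (ball 0 1) U := by
    have := hL0.mono_of_preconnected (Y' := U) ?_ (hm.mono_right hCU)
    · exact this
    · rintro S hS hSU ⟨x, hxS, hx⟩
      rw [him] at hx
      rw [connectedComponentIn_eq hx]
      exact hS.subset_connectedComponentIn hxS hSU
  obtain ⟨a, ha, haz⟩ : z ∈ π '' ball 0 1 := by rwa [him]
  have ha' : ‖a‖ < 1 := mem_ball_zero_iff.1 ha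
  refine ⟨π ∘ discInvolution a, by simp [haz], ?_, ?_, ?_⟩
  · exact hL.precomp isOpen_ball (differentiableOn_discInvolution ha')
      (differentiableOn_discInvolution ha') (mapsTo_discInvolution ha') (mapsTo_discInvolution ha')
      (fun x hx ↦ discInvolution_discInvolution ha' (mem_ball_zero_iff.1 hx))
      (fun x hx ↦ discInvolution_discInvolution ha' (mem_ball_zero_iff.1 hx))
  · intro ζ hζ
    have hζ' := mem_ball_zero_iff.1 hζ
    have h1 := mapsTo_discInvolution ha' hζ
    have h2 := norm_deriv_discInvolution ha' hζ'
    have h3 := hdens _ h1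
    have h4 := norm_discInvolution_lt_one ha' hζ'
    have h5 : 0 < 1 - ‖ζ‖ ^ 2 := by nlinarith [norm_nonneg ζ]
    have h6 : 0 < 1 - ‖discInvolution a ζ‖ ^ 2 := by nlinarith [norm_nonneg (discInvolution a ζ)]
    rw [deriv_comp ζ (hd.differentiableAt (isOpen_ball.mem_nhds h1))
      (hasDerivAt_discInvolution ha' hζ').differentiableAt, norm_mul, ← mul_assoc]
    rw [Function.comp_apply, h3, ← h2]
    have : ‖deriv (discInvolution a) ζ‖ ≠ 0 := by
      intro h
      rw [h, zero_mul] at h2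
      linarith
    field_simp
  · intro γ hγ hγU hγ0
    have hmaps : MapsTo γ (Icc 0 1) (connectedComponentIn U z) := by
      rw [mapsTo_iff_image_subset]
      refine (isPreconnected_Icc.image γ hγ).subset_connectedComponentIn ?_ ?_
      · exact ⟨0, by simp, hγ0⟩
      · rintro _ ⟨t, ht, rfl⟩
        exact hγU t ht
    obtain ⟨Γ, hΓ, hΓm, hΓ0, hΓe⟩ := hc.exists_path_lift_restrict hγ hmaps ha (haz.trans hγ0.symm)
    refine ⟨discInvolution a ∘ Γ, (differentiableOn_discInvolution ha').continuousOn.comp hΓ hΓm,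
      (mapsTo_discInvolution ha').comp hΓm, by simp [hΓ0], fun t ht ↦ ?_⟩
    rw [Function.comp, Function.comp, discInvolution_discInvolution ha' (mem_ball_zero_iff.1 (hΓm ht)), hΓe t ht]

theorem LiftsHol.exists_log {S : Set ℂ} (hS : Convex ℝ S) (hSo : IsOpen S) {g : ℂ → ℂ}
    (hg : DifferentiableOn ℂ g S) (h0 : ∀ z ∈ S, g z ≠ 0) {s : ℂ} (hs : s ∈ S) {x : ℂ}
    (hx : Complex.exp x = g s) :
    ∃ q : ℂ → ℂ, DifferentiableOn ℂ q S ∧ q s = x ∧ ∀ t ∈ S, Complex.exp (q t) = g t := by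
  obtain ⟨q, hq, -, hqs, hqe⟩ := liftsHol_exp.exists_lift S hS hSo g hg (fun z hz ↦ h0 z hz) s hs
    x (mem_univ x) hx
  exact ⟨q, hq, hqs, hqe⟩

theorem norm_deriv_zero_le_one_sub_sq {s : ℂ → ℂ} (hs : DifferentiableOn ℂ s (ball 0 1))
    (hm : MapsTo s (ball 0 1) (ball 0 1)) : ‖deriv s 0‖ ≤ 1 - ‖s 0‖ ^ 2 := by
  have h0 : (0 : ℂ) ∈ ball (0 : ℂ) 1 := mem_ball_self one_pos
  have hs0 : ‖s 0‖ < 1 := mem_ball_zero_iff.1 (hm h0)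
  have hd := hs.differentiableAt (isOpen_ball.mem_nhds h0)
  have h1 := Complex.norm_deriv_le_div_of_mapsTo_ball (R₁ := 1) (R₂ := 1) (c := 0)
    (f := discInvolution (s 0) ∘ s) ((differentiableOn_discInvolution hs0).comp hs hm)
    (by simpa using ((mapsTo_discInvolution hs0).comp hm).mono_right ball_subset_closedBall) one_pos
  have h2 := norm_deriv_discInvolution hs0 hs0
  have h3 : 0 < 1 - ‖s 0‖ ^ 2 := by nlinarith [norm_nonneg (s 0)]
  rw [deriv_comp 0 (hasDerivAt_discInvolution hs0 hs0).differentiableAt hd, norm_mul] at h1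
  rw [discInvolution_self] at h2
  norm_num at h1 h2
  have := mul_le_mul_of_nonneg_right h1 h3.le
  nlinarith

theorem norm_deriv_mul_le_of_notMem_image {φ : ℂ → ℂ} (hφ : DifferentiableOn ℂ φ (ball 0 1))
    (hm : MapsTo φ (ball 0 1) (ball 0 1)) (h0 : φ 0 = 0) {a : ℂ} (ha : ‖a‖ < 1)
    (hna : a ∉ φ '' ball 0 1) : ‖deriv φ 0‖ * (1 + ‖a‖) ≤ 2 * √‖a‖ := by
  have hz : (0 : ℂ) ∈ ball (0 : ℂ) 1 := mem_ball_self one_pos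
  have hane : a ≠ 0 := by
    rintro rfl
    exact hna ⟨0, hz, h0⟩
  have hu : DifferentiableOn ℂ (discInvolution a ∘ φ) (ball 0 1) :=
    (differentiableOn_discInvolution ha).comp hφ hm
  obtain ⟨q, hq, -, hqe⟩ := LiftsHol.exists_log (convex_ball 0 1) isOpen_ball hu (s := 0)
    (x := Complex.log a) (fun z hz h ↦ hna ⟨z, hz, by
      have := discInvolution_discInvolution ha (mem_ball_zero_iff.1 (hm hz))
      rw [show discInvolution a (φ z) = 0 from h] at this
      simpa using this.symm⟩) hz (by simp [h0, Complex.exp_log hane])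
  set s : ℂ → ℂ := fun z ↦ Complex.exp (q z / 2) with hs
  have hss : ∀ z ∈ ball (0 : ℂ) 1, s z ^ 2 = discInvolution a (φ z) := by
    intro z hz
    rw [← Function.comp_apply (f := discInvolution a), ← hqe z hz, hs, ← Complex.exp_nat_mul]
    congr 1
    push_cast
    ring
  have hsd : DifferentiableOn ℂ s (ball 0 1) := (hq.div_const 2).cexp
  have hsm : MapsTo s (ball 0 1) (ball 0 1) := by
    intro z hz
    have h1 := norm_discInvolution_lt_one ha (mem_ball_zero_iff.1 (hm hz))
    rw [← hss z hz, norm_pow] at h1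
    rw [mem_ball_zero_iff]
    nlinarith [norm_nonneg (s z)]
  have h1 := norm_deriv_zero_le_one_sub_sq hsd hsm
  have h2 : ‖s 0‖ ^ 2 = ‖a‖ := by rw [← norm_pow, hss 0 hz, h0, discInvolution_zero]
  have h3 : ‖s 0‖ = √‖a‖ := by rw [← h2, Real.sqrt_sq (norm_nonneg _)]
  have hsd0 := (hsd.differentiableAt (isOpen_ball.mem_nhds hz)).hasDerivAt
  have h4 : deriv (discInvolution a ∘ φ) 0 = 2 * s 0 * deriv s 0 := by
    have : HasDerivAt (fun z ↦ s z ^ 2) (2 * s 0 * deriv s 0) 0 := by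
      simpa using hsd0.fun_pow 2
    rw [← this.deriv]
    apply Filter.EventuallyEq.deriv_eq
    filter_upwards [isOpen_ball.mem_nhds hz] with z hz using (hss z hz).symm
  have hφ0 : ‖φ 0‖ < 1 := by simp [h0]
  rw [deriv_comp 0 (hasDerivAt_discInvolution ha hφ0).differentiableAt
    (hφ.differentiableAt (isOpen_ball.mem_nhds hz))] at h4
  have h5 := norm_deriv_discInvolution ha hφ0
  rw [h0, discInvolution_zero] at h5
  have h6 := congrArg norm h4
  rw [norm_mul, norm_mul, norm_mul, h0, h3] at h6
  norm_num at h5 h6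
  rw [h5] at h6
  rw [h2] at h1
  have h7 : 0 ≤ √‖a‖ := Real.sqrt_nonneg _
  have h8 : (1 - ‖a‖) * (‖deriv φ 0‖ * (1 + ‖a‖)) ≤ (1 - ‖a‖) * (2 * √‖a‖) := by
    nlinarith [mul_le_mul_of_nonneg_left h1 h7]
  exact le_of_mul_le_mul_left h8 (by linarith)

theorem ball_subset_image_of_lt_norm_deriv {φ : ℂ → ℂ} (hφ : DifferentiableOn ℂ φ (ball 0 1))
    (hm : MapsTo φ (ball 0 1) (ball 0 1)) (h0 : φ 0 = 0) {R : ℝ} (hR : R < 1)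
    (hd : 2 * √R / (1 + R) ≤ ‖deriv φ 0‖) : ball 0 R ⊆ φ '' ball 0 1 := by
  intro a ha
  rw [mem_ball_zero_iff] at ha
  by_contra hna
  have h1 := norm_deriv_mul_le_of_notMem_image hφ hm h0 (ha.trans hR) hna
  have hR0 : 0 < R := (norm_nonneg a).trans_lt ha
  have h2 : √‖a‖ < √R := Real.sqrt_lt_sqrt (norm_nonneg a) ha
  have h3 : √R < 1 := by rw [Real.sqrt_lt' one_pos]; simpa using hR
  have h4 := Real.sqrt_nonneg ‖a‖
  have e1 := Real.sq_sqrt hR0.le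
  have e2 := Real.sq_sqrt (norm_nonneg a)
  have h5 : 2 * √R ≤ ‖deriv φ 0‖ * (1 + R) := by rwa [div_le_iff₀ (by linarith)] at hd
  have h6 : 2 * √R * (1 + ‖a‖) ≤ 2 * √‖a‖ * (1 + R) := by
    nlinarith [norm_nonneg a]
  rw [← e1, ← e2] at h6
  have h8 : √R * √‖a‖ < 1 := by nlinarith
  nlinarith [mul_pos (sub_pos.2 h2) (sub_pos.2 h8)]

theorem LiftsHol.isOpen_image {F : ℂ → ℂ} {X Y N : Set ℂ} (hF : LiftsHol F X Y) (hY : IsOpen Y)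
    (hN : IsOpen N) (hNX : N ⊆ X) : IsOpen (F '' N) := by
  rw [isOpen_iff_mem_nhds]
  rintro _ ⟨x, hx, rfl⟩
  obtain ⟨ε, hε, hball⟩ := Metric.isOpen_iff.1 hY (F x) (hF.mapsTo (hNX hx))
  obtain ⟨G, hG, hGX, hGs, hGe⟩ := hF.exists_lift (ball (F x) ε) (convex_ball (F x) ε) isOpen_ball
    id differentiableOn_id hball (F x) (mem_ball_self hε) x (hNX hx) rfl
  have hb : ball (F x) ε ∈ 𝓝 (F x) := ball_mem_nhds _ hε
  have hc : Tendsto G (𝓝 (F x)) (𝓝 x) := by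
    have := (hG.continuousOn.continuousAt hb).tendsto
    rwa [hGs] at this
  filter_upwards [hb, hc (hN.mem_nhds hx)] with t ht htN
  exact ⟨G t, htN, hGe t ht⟩

/-- The points of `U'` with a neighborhood all of whose iterates under `f` stay in `U'`. -/
def stableSet (f : ℂ → ℂ) (U' : Set ℂ) : Set ℂ :=
  {z : ℂ | z ∈ U' ∧ ∃ N : Set ℂ, IsOpen N ∧ z ∈ N ∧ ∀ n : ℕ, f^[n] '' N ⊆ U'}

/-- A holomorphic covering `f : U' → U` with `U' ⊆ U`, and the hyperbolic density of `U`. -/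
structure ExpandingCovering (f : ℂ → ℂ) (U' U : Set ℂ) (ρ : ℂ → ℝ) : Prop where
  isOpen : IsOpen U
  subset : U' ⊆ U
  liftsHol : LiftsHol f U' U
  density : IsHypDensity U ρ

theorem isOpen_stableSet {f : ℂ → ℂ} {U' : Set ℂ} : IsOpen (stableSet f U') := by
  rw [isOpen_iff_mem_nhds]
  rintro z ⟨-, N, hN, hzN, hNU⟩
  filter_upwards [hN.mem_nhds hzN] with x hx
  exact ⟨hNU 0 ⟨x, hx, rfl⟩, N, hN, hx, hNU⟩

namespace ExpandingCovering

variable {f : ℂ → ℂ} {U' U : Set ℂ} {ρ : ℂ → ℝ} (hf : ExpandingCovering f U' U ρ)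
include hf

theorem iterate (n : ℕ) : LiftsHol f^[n] (iterDomain f U' U n) U :=
  hf.liftsHol.iterate hf.isOpen hf.subset n

theorem mem_iterDomain {n : ℕ} {z : ℂ} :
    z ∈ iterDomain f U' U n ↔ z ∈ U ∧ ∀ i < n, f^[i] z ∈ U' :=
  _root_.mem_iterDomain hf.liftsHol.mapsTo hf.subset

theorem iterDomain_subset (n : ℕ) : iterDomain f U' U n ⊆ U :=
  fun _ hz ↦ (hf.mem_iterDomain.1 hz).1

theorem iterDomain_anti {m n : ℕ} (h : m ≤ n) : iterDomain f U' U n ⊆ iterDomain f U' U m :=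
  fun _ hz ↦ hf.mem_iterDomain.2
    ⟨(hf.mem_iterDomain.1 hz).1, fun i hi ↦ (hf.mem_iterDomain.1 hz).2 i (hi.trans_le h)⟩

theorem iterate_mem_iterDomain {m n : ℕ} {z : ℂ} (hz : z ∈ iterDomain f U' U (m + n)) :
    f^[n] z ∈ iterDomain f U' U m := by
  rw [hf.mem_iterDomain] at hz ⊢
  refine ⟨(hf.iterate n).mapsTo (hf.mem_iterDomain.2 ⟨hz.1, fun i hi ↦ hz.2 i (by lia)⟩),
    fun i hi ↦ ?_⟩
  rw [← Function.iterate_add_apply]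
  exact hz.2 _ (by lia)

theorem mem_iterDomain_add {m n : ℕ} {z : ℂ} (hz : z ∈ iterDomain f U' U n)
    (hz' : f^[n] z ∈ iterDomain f U' U m) : z ∈ iterDomain f U' U (m + n) := by
  rw [hf.mem_iterDomain] at hz hz' ⊢
  refine ⟨hz.1, fun i hi ↦ ?_⟩
  by_cases h : i < n
  · exact hz.2 i h
  · have := hz'.2 (i - n) (by lia)
    rwa [← Function.iterate_add_apply, Nat.sub_add_cancel (by lia)] at this

theorem stableSet_subset_iterDomain (n : ℕ) : stableSet f U' ⊆ iterDomain f U' U n := by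
  rintro z ⟨hz, N, -, hzN, hNU⟩
  exact hf.mem_iterDomain.2 ⟨hf.subset hz, fun i _ ↦ hNU i ⟨z, hzN, rfl⟩⟩

theorem stableSet_subset : stableSet f U' ⊆ U := hf.stableSet_subset_iterDomain 0

theorem subset_stableSet {N : Set ℂ} (hN : IsOpen N)
    (h : ∀ᶠ n in atTop, N ⊆ iterDomain f U' U n) : N ⊆ stableSet f U' := by
  have h' : ∀ n, ∀ z ∈ N, f^[n] z ∈ U' := by
    intro n z hz
    obtain ⟨m, hm, hn⟩ := (h.and (eventually_gt_atTop n)).exists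
    exact (hf.mem_iterDomain.1 (hm hz)).2 n hn
  intro z hz
  refine ⟨h' 0 z hz, N, hN, hz, ?_⟩
  rintro n _ ⟨x, hx, rfl⟩
  exact h' n x hx

theorem mapsTo_stableSet (n : ℕ) : MapsTo f^[n] (stableSet f U') (stableSet f U') := by
  have ho := (hf.iterate n).isOpen_image hf.isOpen isOpen_stableSet
    (hf.stableSet_subset_iterDomain n)
  have := hf.subset_stableSet ho (Eventually.of_forall fun m ↦ ?_)
  · exact fun z hz ↦ this ⟨z, hz, rfl⟩
  · rintro _ ⟨z, hz, rfl⟩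
    exact hf.iterate_mem_iterDomain (hf.stableSet_subset_iterDomain _ hz)

theorem mem_stableSet_of_iterate {n : ℕ} {z : ℂ} (hz : z ∈ iterDomain f U' U n)
    (h : f^[n] z ∈ stableSet f U') : z ∈ stableSet f U' := by
  have ho := ((hf.iterate n).restrict isOpen_stableSet hf.stableSet_subset).isOpen
  refine hf.subset_stableSet ho ?_ ⟨hz, h⟩
  filter_upwards [eventually_ge_atTop n] with m hm x hx
  exact hf.iterDomain_anti (Nat.le_add_right m n)
    (hf.mem_iterDomain_add hx.1 (hf.stableSet_subset_iterDomain m hx.2))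

end ExpandingCovering

namespace LiftsHol

theorem exists_disc_lift {F g : ℂ → ℂ} {X Y : Set ℂ} (hF : LiftsHol F X Y)
    (hg : DifferentiableOn ℂ g (ball 0 1)) (hm : MapsTo g (ball 0 1) Y) {x : ℂ} (hx : x ∈ X)
    (hgx : F x = g 0) :
    ∃ G : ℂ → ℂ, DifferentiableOn ℂ G (ball 0 1) ∧ MapsTo G (ball 0 1) X ∧ G 0 = x ∧
      ∀ t ∈ ball (0 : ℂ) 1, F (G t) = g t :=
  hF.exists_lift (ball 0 1) (convex_ball 0 1) isOpen_ball g hg hm 0 (mem_ball_self one_pos) x hx hgx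

end LiftsHol

namespace ExpandingCovering

variable {f : ℂ → ℂ} {U' U : Set ℂ} {ρ : ℂ → ℝ} (hf : ExpandingCovering f U' U ρ)
include hf

theorem exists_centered_lift {n : ℕ} {w : ℂ} (hw : w ∈ iterDomain f U' U n) {ψ : ℂ → ℂ}
    (hψ : CenteredCover U ρ (f^[n] w) ψ) :
    ∃ π : ℂ → ℂ, DifferentiableOn ℂ π (ball 0 1) ∧ MapsTo π (ball 0 1) (iterDomain f U' U n) ∧
      π 0 = w ∧ ∀ ζ ∈ ball (0 : ℂ) 1, f^[n] (π ζ) = ψ ζ :=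
  (hf.iterate n).exists_disc_lift hψ.liftsHol.differentiableOn hψ.liftsHol.mapsTo hw
    hψ.apply_zero.symm

theorem eventually_image_ball_subset {w : ℂ} (hw : w ∈ stableSet f U') {R : ℝ} (hR0 : 0 < R)
    (hR : R < 1) {ψ : ℕ → ℂ → ℂ} (hψ : ∀ n, CenteredCover U ρ (f^[n] w) (ψ n)) :
    ∀ᶠ n in atTop, ψ n '' ball 0 R ⊆ stableSet f U' := by
  have hz : (0 : ℂ) ∈ ball (0 : ℂ) 1 := mem_ball_self one_pos
  have hB : ball (0 : ℂ) 1 ∈ 𝓝 (0 : ℂ) := ball_mem_nhds _ one_pos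
  have hwn := fun n ↦ hf.stableSet_subset_iterDomain n hw
  choose π hπd hπm hπ0 hπe using fun n ↦ hf.exists_centered_lift (hwn n) (hψ n)
  obtain ⟨r, hr, hrW⟩ := Metric.isOpen_iff.1 isOpen_stableSet w hw
  have hlow : ∀ n, r ≤ ‖deriv (π n) 0‖ := by
    intro n
    have hBn : ball w r ⊆ iterDomain f U' U n := hrW.trans (hf.stableSet_subset_iterDomain n)
    have hwr : ball w r ∈ 𝓝 w := ball_mem_nhds w hr
    obtain ⟨σ, hσd, hσm, hσ0, hσe⟩ := (hψ n).liftsHol.exists_lift (ball w r) (convex_ball w r)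
      isOpen_ball f^[n] ((hf.iterate n).differentiableOn.mono hBn)
      ((hf.iterate n).mapsTo.mono_left hBn) w (mem_ball_self hr) 0 hz (hψ n).apply_zero
    have hid : EqOn (π n ∘ σ) id (ball w r) := by
      refine (hf.iterate n).eqOn (ball w r) (convex_ball w r).isPreconnected _ _
        ((hπd n).continuousOn.comp hσd.continuousOn hσm) continuousOn_id ((hπm n).comp hσm) hBn
        ?_ w (mem_ball_self hr) (by simp [hσ0, hπ0])
      intro t ht
      rw [Function.comp, hπe n _ (hσm ht), hσe t ht, id]
    have h1 : deriv (π n) 0 * deriv σ w = 1 := by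
      have h1 : HasDerivAt (π n) (deriv (π n) 0) (σ w) := by
        rw [hσ0]
        exact ((hπd n).differentiableAt hB).hasDerivAt
      have h2 := h1.comp w (hσd.differentiableAt hwr).hasDerivAt
      exact h2.unique ((hasDerivAt_id w).congr_of_eventuallyEq
        (by filter_upwards [hwr] with u hu using hid hu))
    have h2 := Complex.norm_deriv_le_div_of_mapsTo_ball (R₂ := 1) hσd
      (by rw [hσ0]; exact hσm.mono_right ball_subset_closedBall) hr
    have h3 := congrArg norm h1
    rw [norm_mul, norm_one] at h3
    have h4 : ‖deriv (π n) 0‖ * ‖deriv σ w‖ ≤ ‖deriv (π n) 0‖ * (1 / r) := by gcongr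
    rw [h3, mul_one_div, le_div_iff₀ hr] at h4
    linarith
  have hfac : ∀ n m, n ≤ m → ∃ φ : ℂ → ℂ, DifferentiableOn ℂ φ (ball 0 1) ∧
      MapsTo φ (ball 0 1) (ball 0 1) ∧ φ 0 = 0 ∧ EqOn (π n ∘ φ) (π m) (ball 0 1) := by
    intro n m hnm
    have hmn : MapsTo (π m) (ball 0 1) (iterDomain f U' U n) :=
      (hπm m).mono_right (hf.iterDomain_anti hnm)
    obtain ⟨φ, hφd, hφm, hφ0, hφe⟩ := (hψ n).liftsHol.exists_disc_lift (x := 0)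
      ((hf.iterate n).differentiableOn.comp (hπd m) hmn) ((hf.iterate n).mapsTo.comp hmn) hz
      (by rw [(hψ n).apply_zero, Function.comp, hπ0])
    refine ⟨φ, hφd, hφm, hφ0, ?_⟩
    refine (hf.iterate n).eqOn (ball 0 1) (convex_ball 0 1).isPreconnected _ _
        ((hπd n).continuousOn.comp hφd.continuousOn hφm) (hπd m).continuousOn ((hπm n).comp hφm)
        hmn ?_ 0 hz (by simp [hφ0, hπ0])
    intro t ht
    rw [Function.comp, hπe n _ (hφm ht), hφe t ht, Function.comp]
  have hder : ∀ n m, n ≤ m → ∃ φ : ℂ → ℂ, DifferentiableOn ℂ φ (ball 0 1) ∧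
      MapsTo φ (ball 0 1) (ball 0 1) ∧ φ 0 = 0 ∧ EqOn (π n ∘ φ) (π m) (ball 0 1) ∧
      ‖deriv (π m) 0‖ = ‖deriv (π n) 0‖ * ‖deriv φ 0‖ := by
    intro n m hnm
    obtain ⟨φ, hφd, hφm, hφ0, hφe⟩ := hfac n m hnm
    refine ⟨φ, hφd, hφm, hφ0, hφe, ?_⟩
    have h1 : HasDerivAt (π n) (deriv (π n) 0) (φ 0) := by
      rw [hφ0]
      exact ((hπd n).differentiableAt hB).hasDerivAt
    have h2 := h1.comp 0 (hφd.differentiableAt hB).hasDerivAt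
    have h3 := h2.unique (((hπd m).differentiableAt hB).hasDerivAt.congr_of_eventuallyEq
        (by filter_upwards [hB] with u hu using hφe hu))
    rw [← h3, norm_mul]
  have hanti : Antitone fun n ↦ ‖deriv (π n) 0‖ := by
    intro n m hnm
    obtain ⟨φ, hφd, hφm, hφ0, -, hφe⟩ := hder n m hnm
    have h1 := Complex.norm_deriv_le_div_of_mapsTo_ball (R₂ := 1) hφd
      (by rw [hφ0]; exact hφm.mono_right ball_subset_closedBall) one_pos
    simp only [hφe]
    exact mul_le_of_le_one_right (norm_nonneg _) (by simpa using h1)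
  have hbdd : BddBelow (range fun n ↦ ‖deriv (π n) 0‖) := ⟨r, by
    rintro _ ⟨n, rfl⟩
    exact hlow n⟩
  have hlim := tendsto_atTop_ciInf hanti hbdd
  set A : ℝ := ⨅ n, ‖deriv (π n) 0‖
  have hA : r ≤ A := le_ciInf hlow
  have hc : 2 * √R / (1 + R) < 1 := by
    rw [div_lt_one (by linarith)]
    have h3 : √R < 1 := by rw [Real.sqrt_lt' one_pos]; simpa using hR
    nlinarith [Real.sq_sqrt hR0.le]
  have hev : ∀ᶠ n in atTop, 2 * √R / (1 + R) * ‖deriv (π n) 0‖ < A := by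
    refine (hlim.const_mul _).eventually_lt_const ?_
    nlinarith
  filter_upwards [hev] with n hn
  have hsub : ∀ m ≥ n, π n '' ball 0 R ⊆ iterDomain f U' U m := by
    intro m hm
    obtain ⟨φ, hφd, hφm, hφ0, hφe, hφn⟩ := hder n m hm
    have h1 : 2 * √R / (1 + R) ≤ ‖deriv φ 0‖ := by
      have h2 : A ≤ ‖deriv (π m) 0‖ := ciInf_le hbdd m
      have h3 := hlow n
      rw [hφn] at h2
      exact le_of_mul_le_mul_left (by linarith : ‖deriv (π n) 0‖ * _ ≤ _) (by linarith)
    rintro _ ⟨ζ, hζ, rfl⟩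
    obtain ⟨ξ, hξ, rfl⟩ := ball_subset_image_of_lt_norm_deriv hφd hφm hφ0 hR h1 hζ
    have := hφe hξ
    rw [Function.comp] at this
    rw [this]
    exact hπm m hξ
  have hBR : ball (0 : ℂ) R ⊆ ball 0 1 := ball_subset_ball hR.le
  have himg : ψ n '' ball 0 R = f^[n] '' (π n '' ball 0 R) := by
    rw [← image_comp]
    exact image_congr fun ζ hζ ↦ (hπe n ζ (hBR hζ)).symm
  rw [himg]
  refine ((hf.mapsTo_stableSet n).mono_left ?_).image_subset
  have hopen : IsOpen (π n '' ball 0 R) := by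
    have h1 : IsOpen (ψ n '' ball 0 R) := (hψ n).liftsHol.isOpen_image hf.isOpen isOpen_ball hBR
    rw [isOpen_iff_mem_nhds]
    rintro _ ⟨ζ, hζ, rfl⟩
    have hAn : AnalyticAt ℂ (π n) ζ := (hπd n).analyticAt (isOpen_ball.mem_nhds (hBR hζ))
    rcases hAn.eventually_constant_or_nhds_le_map_nhds with h | h
    · exfalso
      have h2 : deriv (ψ n) ζ = 0 := by
        have : ψ n =ᶠ[𝓝 ζ] fun _ ↦ f^[n] (π n ζ) := by
          filter_upwards [h, isOpen_ball.mem_nhds (hBR hζ)] with ξ h1 h2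
          rw [← hπe n ξ h2, h1]
        rw [this.deriv_eq, deriv_const]
      exact (hψ n).liftsHol.deriv_ne_zero hf.isOpen (hBR hζ) h2
    · exact h (image_mem_map (isOpen_ball.mem_nhds hζ))
  exact hf.subset_stableSet hopen (by filter_upwards [eventually_ge_atTop n] with m hm using hsub m hm)

end ExpandingCovering

namespace CenteredCover

variable {U : Set ℂ} {ρ : ℂ → ℝ} {z : ℂ} {ψ : ℂ → ℂ}

theorem exists_endpoint_lift (hU : IsOpen U) (hψ : CenteredCover U ρ z ψ) {γ : ℝ → ℂ}
    (hγ : ContDiffOn ℝ 1 γ (Icc 0 1)) (hγU : ∀ t ∈ Icc (0 : ℝ) 1, γ t ∈ U) (hγ0 : γ 0 = z) :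
    ∃ ζ ∈ ball (0 : ℂ) 1, ψ ζ = γ 1 ∧ -Real.log (1 - ‖ζ‖ ^ 2) ≤ hypLength ρ γ := by
  obtain ⟨Γ, hΓ, hΓm, hΓ0, hΓe⟩ := hψ.exists_path_lift γ hγ.continuousOn hγU hγ0
  refine ⟨Γ 1, hΓm (by simp), hΓe 1 (by simp), ?_⟩
  have hpos : ∀ t ∈ Icc (0 : ℝ) 1, 0 < 1 - ‖Γ t‖ ^ 2 := by
    intro t ht
    have := mem_ball_zero_iff.1 (hΓm ht)
    nlinarith [norm_nonneg (Γ t)]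
  have hψ' : ∀ t ∈ Icc (0 : ℝ) 1, deriv ψ (Γ t) ≠ 0 :=
    fun t ht ↦ hψ.liftsHol.deriv_ne_zero hU (hΓm ht)
  have hρ : ∀ t ∈ Icc (0 : ℝ) 1, ρ (γ t) = 2 / (1 - ‖Γ t‖ ^ 2) / ‖deriv ψ (Γ t)‖ := by
    intro t ht
    rw [eq_div_iff (norm_ne_zero_iff.2 (hψ' t ht)), ← hψ.density _ (hΓm ht), hΓe t ht]
  have hInt : MeasureTheory.IntegrableOn (fun t ↦ ρ (γ t) * ‖deriv γ t‖) (Icc 0 1) := by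
    rw [integrableOn_Icc_iff_integrableOn_Ioo]
    have hk : ContinuousOn (fun t ↦ 2 / (1 - ‖Γ t‖ ^ 2) / ‖deriv ψ (Γ t)‖ *
        ‖derivWithin γ (Icc 0 1) t‖) (Icc 0 1) := by
      have h1 : ContinuousOn (derivWithin γ (Icc 0 1)) (Icc 0 1) :=
        hγ.continuousOn_derivWithin (uniqueDiffOn_Icc zero_lt_one) le_rfl
      have h2 : ContinuousOn (fun t ↦ deriv ψ (Γ t)) (Icc 0 1) :=
        (hψ.liftsHol.differentiableOn.deriv isOpen_ball).continuousOn.comp hΓ hΓm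
      refine ((continuousOn_const.div (continuousOn_const.sub (hΓ.norm.pow 2))
        fun t ht ↦ (hpos t ht).ne').div h2.norm fun t ht ↦ norm_ne_zero_iff.2 (hψ' t ht)).mul h1.norm
    refine MeasureTheory.IntegrableOn.congr_fun (hk.integrableOn_Icc.mono_set Ioo_subset_Icc_self)
      (fun t ht ↦ ?_) measurableSet_Ioo
    have h1 : derivWithin γ (Icc 0 1) t = deriv γ t :=
      derivWithin_of_mem_nhds (Icc_mem_nhds ht.1 ht.2)
    simp only [h1, hρ t (Ioo_subset_Icc_self ht)]
  have hcont : ContinuousOn (fun t ↦ -Real.log (1 - ‖Γ t‖ ^ 2)) (Icc 0 1) :=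
    ((continuousOn_const.sub (hΓ.norm.pow 2)).log fun t ht ↦ (hpos t ht).ne').neg
  have hder : ∀ t ∈ Ioo (0 : ℝ) 1, HasDerivAt Γ (deriv γ t / deriv ψ (Γ t)) t := by
    intro t ht
    have ht' := Ioo_subset_Icc_self ht
    have hn : Icc (0 : ℝ) 1 ∈ 𝓝 t := Icc_mem_nhds ht.1 ht.2
    have h1 : HasFDerivAt ψ ((ContinuousLinearMap.toSpanSingleton ℂ (deriv ψ (Γ t))).restrictScalars ℝ)
        (Γ t) :=
      (hψ.liftsHol.differentiableOn.differentiableAt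
        (isOpen_ball.mem_nhds (hΓm ht'))).hasDerivAt.hasFDerivAt.restrictScalars ℝ
    have h2 : HasFDerivAt γ (ContinuousLinearMap.toSpanSingleton ℝ (deriv γ t)) t :=
      ((hγ.differentiableOn one_ne_zero).differentiableAt hn).hasDerivAt.hasFDerivAt
    have h3 := h1.of_comp_of_leftInverse (hΓ.continuousAt hn) h2
      (by filter_upwards [hn] with s hs using hΓe s hs)
      (f'symm := (ContinuousLinearMap.toSpanSingleton ℂ (deriv ψ (Γ t))⁻¹).restrictScalars ℝ)
      (fun x ↦ by simp [hψ' t ht'])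
    refine h3.hasDerivAt.congr_deriv ?_
    simp [div_eq_mul_inv]
  have key := intervalIntegral.sub_le_integral_of_hasDeriv_right_of_le zero_le_one hcont
    (g' := fun t ↦ 2 * inner ℝ (Γ t) (deriv γ t / deriv ψ (Γ t)) / (1 - ‖Γ t‖ ^ 2)) ?_ hInt ?_
  · rw [hypLength]
    simpa [hΓ0] using key
  · intro t ht
    have h1 := (((hder t ht).norm_sq.const_sub 1).log (hpos t (Ioo_subset_Icc_self ht)).ne').neg
    refine HasDerivAt.hasDerivWithinAt (h1.congr_deriv ?_)
    ring
  · intro t ht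
    have ht' := Ioo_subset_Icc_self ht
    have h1 := hpos t ht'
    have h2 := real_inner_le_norm (Γ t) (deriv γ t / deriv ψ (Γ t))
    have h3 : ‖Γ t‖ ≤ 1 := (mem_ball_zero_iff.1 (hΓm ht')).le
    rw [norm_div] at h2
    have h4 : ‖Γ t‖ * (‖deriv γ t‖ / ‖deriv ψ (Γ t)‖) ≤ ‖deriv γ t‖ / ‖deriv ψ (Γ t)‖ :=
      mul_le_of_le_one_left (by positivity) h3
    calc _ ≤ 2 * (‖deriv γ t‖ / ‖deriv ψ (Γ t)‖) / (1 - ‖Γ t‖ ^ 2) := by gcongr; linarith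
      _ = _ := by rw [hρ t ht']; ring

end CenteredCover

theorem ExpandingCovering.tendsto_hypDistToSet {f : ℂ → ℂ} {U' U : Set ℂ} {ρ : ℂ → ℝ}
    (hf : ExpandingCovering f U' U ρ) {w : ℂ} (hw : w ∈ stableSet f U') :
    Tendsto (fun m : ℕ ↦ hypDistToSet U ρ (f^[m] w) (U \ stableSet f U')) atTop (𝓝 ⊤) := by
  have hwU : ∀ n, f^[n] w ∈ U := fun n ↦ hf.stableSet_subset (hf.mapsTo_stableSet n hw)
  choose ψ hψ using fun n ↦ hf.density.exists_centeredCover hf.isOpen (hwU n)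
  rw [ENNReal.tendsto_nhds_top_iff_nnreal]
  intro M
  set R : ℝ := √(1 - Real.exp (-(M + 1)) / 2)
  have hexp : Real.exp (-((M : ℝ) + 1)) ≤ 1 := Real.exp_le_one_iff.2 (by have := M.2; linarith [NNReal.coe_nonneg M])
  have hR0 : 0 < R := Real.sqrt_pos.2 (by linarith)
  have hR1 : R < 1 := by
    rw [Real.sqrt_lt' one_pos]
    have := Real.exp_pos (-((M : ℝ) + 1))
    linarith
  filter_upwards [hf.eventually_image_ball_subset hw hR0 hR1 hψ] with n hn
  have hlt : (M : ℝ≥0∞) < ENNReal.ofReal (M + 1) := by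
    rw [← ENNReal.ofReal_coe_nnreal]
    exact (ENNReal.ofReal_lt_ofReal_iff (by positivity)).2 (by linarith)
  refine hlt.trans_le ?_
  refine le_iInf₂ fun e he ↦ le_iInf₂ fun γ hγ ↦ ENNReal.ofReal_le_ofReal ?_
  by_contra! hlen
  obtain ⟨ζ, hζ, hζe, hζl⟩ := (hψ n).exists_endpoint_lift hf.isOpen hγ.1 hγ.2.1 hγ.2.2.1
  have hpos : 0 < 1 - ‖ζ‖ ^ 2 := by
    have := mem_ball_zero_iff.1 hζ
    nlinarith [norm_nonneg ζ]
  have h1 : Real.exp (-((M : ℝ) + 1)) < 1 - ‖ζ‖ ^ 2 := by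
    rw [← Real.lt_log_iff_exp_lt hpos]
    linarith
  refine he.2 (hn ⟨ζ, ?_, hζe.trans hγ.2.2.2⟩)
  rw [mem_ball_zero_iff]
  refine Real.lt_sqrt_of_sq_lt ?_
  have := Real.exp_pos (-((M : ℝ) + 1))
  linarith

/-- The iterates `f^[nk k]` converge to `z₀` uniformly on compact subsets of `W`. -/
def IteratesTendTo (f : ℂ → ℂ) (nk : ℕ → ℕ) (W : Set ℂ) (z₀ : ℂ) : Prop :=
  ∀ K : Set ℂ, K ⊆ W → IsCompact K → ∀ ε > (0 : ℝ), ∃ N : ℕ, ∀ k ≥ N, ∀ z ∈ K,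
    dist (f^[nk k] z) z₀ < ε

theorem ExpandingCovering.notMem_of_iteratesTendTo {f : ℂ → ℂ} {U' U : Set ℂ} {ρ : ℂ → ℝ}
    (hf : ExpandingCovering f U' U ρ) {w z₀ : ℂ} (hw : w ∈ stableSet f U') {nk : ℕ → ℕ}
    (hconv : IteratesTendTo f nk (connectedComponentIn (stableSet f U') w) z₀) : z₀ ∉ U := by
  intro hz
  obtain ⟨δ, hδ, hδU⟩ := Metric.isOpen_iff.1 hf.isOpen z₀ hz
  obtain ⟨r, hr, hrW⟩ := Metric.nhds_basis_closedBall.mem_iff.1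
    (isOpen_stableSet.connectedComponentIn.mem_nhds (mem_connectedComponentIn hw))
  obtain ⟨ψ, hψ⟩ := hf.density.exists_centeredCover hf.isOpen (hf.stableSet_subset hw)
  set C : ℝ := ‖deriv ψ 0‖ with hC
  have hC0 : 0 ≤ C := norm_nonneg _
  set ε : ℝ := min (δ / 2) (r * δ / (8 * (C + 1))) with hε
  have hε0 : 0 < ε := by positivity
  obtain ⟨k, hk⟩ := hconv _ hrW (isCompact_closedBall w r) ε hε0
  replace hk := hk k le_rfl
  set n := nk k
  have hwb : w ∈ closedBall w r := mem_closedBall_self hr.le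
  have hwn : w ∈ iterDomain f U' U n := hf.stableSet_subset_iterDomain n hw
  have hbn : ball w r ⊆ iterDomain f U' U n := ball_subset_closedBall.trans <|
    hrW.trans <| (connectedComponentIn_subset _ _).trans (hf.stableSet_subset_iterDomain n)
  have h1 : ‖deriv f^[n] w‖ ≤ (2 * ε) / r := by
    refine Complex.norm_deriv_le_div_of_mapsTo_ball
      ((hf.iterate n).differentiableOn.mono hbn) (fun z hz ↦ ?_) hr
    rw [mem_closedBall]
    have e1 := hk z (ball_subset_closedBall hz)
    have e2 := hk w hwb
    have := dist_triangle_right (f^[n] z) (f^[n] w) z₀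
    linarith
  set x := f^[n] w
  have hx2 : dist x z₀ < δ / 2 := (hk w hwb).trans_le (min_le_left _ _)
  have hxB : x ∈ ball z₀ δ := by
    rw [mem_ball]
    linarith
  obtain ⟨π, hπd, hπm, hπx, hπe⟩ := (hf.iterate n).exists_lift (ball z₀ δ) (convex_ball z₀ δ)
    isOpen_ball id differentiableOn_id hδU x hxB w hwn rfl
  have h0 : (0 : ℂ) ∈ ball (0 : ℂ) 1 := mem_ball_self one_pos
  obtain ⟨φ, hφd, hφm, hφx, hφe⟩ := hψ.liftsHol.exists_lift (ball z₀ δ) (convex_ball z₀ δ)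
    isOpen_ball π hπd (hπm.mono_right (hf.iterDomain_subset n)) x hxB 0 h0
    (by rw [hψ.apply_zero, hπx])
  have hsub : ball x (δ / 2) ⊆ ball z₀ δ := ball_subset_ball' (by linarith)
  have hBx : ball z₀ δ ∈ 𝓝 x := isOpen_ball.mem_nhds hxB
  have h2 : ‖deriv φ x‖ ≤ 1 / (δ / 2) := by
    refine Complex.norm_deriv_le_div_of_mapsTo_ball (hφd.mono hsub) ?_ (by positivity)
    rw [hφx]
    exact (hφm.mono_left hsub).mono_right ball_subset_closedBall
  have h3 : deriv π x = deriv ψ 0 * deriv φ x := by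
    have e1 : HasDerivAt ψ (deriv ψ 0) (φ x) := by
      rw [hφx]
      exact (hψ.liftsHol.differentiableOn.differentiableAt (isOpen_ball.mem_nhds h0)).hasDerivAt
    exact ((e1.comp x (hφd.differentiableAt hBx).hasDerivAt).congr_of_eventuallyEq
      (by filter_upwards [hBx] with u hu using (hφe u hu).symm)).deriv
  have h4 : deriv f^[n] w * deriv π x = 1 := by
    have e1 : HasDerivAt f^[n] (deriv f^[n] w) (π x) := by
      rw [hπx]
      exact ((hf.iterate n).differentiableOn.differentiableAt
        ((hf.iterate n).isOpen.mem_nhds hwn)).hasDerivAt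
    exact (e1.comp x (hπd.differentiableAt hBx).hasDerivAt).unique
      ((hasDerivAt_id x).congr_of_eventuallyEq
        (by filter_upwards [hBx] with u hu using hπe u hu))
  have h5 := congrArg norm h4
  rw [h3, norm_mul, norm_mul, norm_one] at h5
  have h6 : ε ≤ r * δ / (8 * (C + 1)) := min_le_right _ _
  have h7 : ‖deriv f^[n] w‖ * (C * ‖deriv φ x‖) ≤ (2 * ε) / r * (C * (1 / (δ / 2))) := by
    gcongr
  rw [h5] at h7
  have h8 : (2 * ε) / r * (C * (1 / (δ / 2))) ≤
      (2 * (r * δ / (8 * (C + 1)))) / r * (C * (1 / (δ / 2))) := by gcongr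
  have h9 : (2 * (r * δ / (8 * (C + 1)))) / r * (C * (1 / (δ / 2))) = C / (2 * (C + 1)) := by
    field_simp
    norm_num
  have h10 : C / (2 * (C + 1)) < 1 := by
    rw [div_lt_one (by positivity)]
    linarith
  linarith

theorem sub_eq_sub_of_exp_eq {A₁ A₂ : ℂ → ℂ} {S : Set ℂ} (hS : IsPreconnected S)
    (h₁ : ContinuousOn A₁ S) (h₂ : ContinuousOn A₂ S)
    (he : ∀ t ∈ S, Complex.exp (A₁ t) = Complex.exp (A₂ t)) {s t : ℂ} (hs : s ∈ S) (ht : t ∈ S) :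
    A₁ t - A₂ t = A₁ s - A₂ s := by
  have h := liftsHol_exp.eqOn S hS A₁ (fun u ↦ A₂ u + (A₁ s - A₂ s)) h₁ (h₂.add continuousOn_const)
    (mapsTo_univ _ _) (mapsTo_univ _ _) (fun u hu ↦ by
      rw [Complex.exp_add, Complex.exp_sub, he u hu, he s hs, div_self (Complex.exp_ne_zero _),
        mul_one]) s hs (by ring) ht
  rw [h]
  ring

/-- A logarithm of `m ∘ exp`, where `m` has no zero on a disc, has period `2 * π * I`. -/
theorem add_two_pi_I_of_exp_eq {m A : ℂ → ℂ} {ρ : ℝ} (hm : DifferentiableOn ℂ m (ball 0 ρ))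
    (hm0 : ∀ z ∈ ball (0 : ℂ) ρ, m z ≠ 0) {S : Set ℂ} (hS : IsPreconnected S)
    (hSρ : MapsTo Complex.exp S (ball 0 ρ)) (hA : ContinuousOn A S)
    (he : ∀ ζ ∈ S, Complex.exp (A ζ) = m (Complex.exp ζ)) {ζ : ℂ} (hζ : ζ ∈ S)
    (hζ' : ζ + 2 * Real.pi * Complex.I ∈ S) : A (ζ + 2 * Real.pi * Complex.I) = A ζ := by
  have hz : Complex.exp ζ ∈ ball 0 ρ := hSρ hζ
  obtain ⟨q, hq, -, hqe⟩ := LiftsHol.exists_log (convex_ball 0 ρ) isOpen_ball hm hm0 hz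
    (Complex.exp_log (hm0 _ hz))
  have := sub_eq_sub_of_exp_eq hS hA
    (hq.continuousOn.comp Complex.continuous_exp.continuousOn hSρ)
    (fun t ht ↦ by rw [he t ht, Function.comp, hqe _ (hSρ ht)]) hζ hζ'
  simp only [Function.comp, Complex.exp_periodic ζ] at this
  exact sub_left_injective this

/-- The half-plane mapped by `exp` onto the punctured disc of radius `r`. -/
def expHalfPlane (r : ℝ) : Set ℂ := {ζ : ℂ | ζ.re < Real.log r}

theorem convex_expHalfPlane (r : ℝ) : Convex ℝ (expHalfPlane r) := convex_halfSpace_re_lt _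

theorem isOpen_expHalfPlane (r : ℝ) : IsOpen (expHalfPlane r) :=
  isOpen_lt Complex.continuous_re continuous_const

theorem norm_exp_lt {r : ℝ} (hr : 0 < r) {ζ : ℂ} (hζ : ζ ∈ expHalfPlane r) : ‖Complex.exp ζ‖ < r := by
  rw [Complex.norm_exp]
  exact (Real.lt_log_iff_exp_lt hr).1 hζ

theorem mem_expHalfPlane {r : ℝ} (hr : 0 < r) {ζ : ℂ} : ζ ∈ expHalfPlane r ↔ ‖Complex.exp ζ‖ < r := by
  rw [Complex.norm_exp]
  exact (Real.lt_log_iff_exp_lt hr)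

theorem add_mem_expHalfPlane {r : ℝ} {ζ a : ℂ} (hζ : ζ ∈ expHalfPlane r) (ha : a.re = 0) :
    ζ + a ∈ expHalfPlane r := by
  simpa [expHalfPlane, ha] using hζ

theorem add_const_exp_mem {r : ℝ} (hr : 0 < r) {ζ z₀ : ℂ} (hζ : ζ ∈ expHalfPlane r) :
    z₀ + Complex.exp ζ ∈ ball z₀ r \ {z₀} := by
  constructor
  · simpa using norm_exp_lt hr hζ
  · simp [Complex.exp_ne_zero]

/-- `E` uniformizes an inverse image of a punctured disc around `z₀` under `F`, where the inverse
image surrounds the disc of radius `s` around `z₀`, with total winding number `σ`. -/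
structure WindingLift (F : ℂ → ℂ) (X : Set ℂ) (z₀ : ℂ) (s r : ℝ) (D : ℕ) (σ : ℤ) (E : ℂ → ℂ) :
    Prop where
  pos : D ≠ 0
  sign : σ * σ = 1
  differentiableOn : DifferentiableOn ℂ E (expHalfPlane r)
  mapsTo : MapsTo E (expHalfPlane r) X
  apply_eq : ∀ ζ ∈ expHalfPlane r, F (E ζ) = z₀ + Complex.exp ζ
  unique : ∀ a : ℂ, Complex.exp a = 1 → (∃ ζ ∈ expHalfPlane r, E (ζ + a) = E ζ) →
    ∀ ζ ∈ expHalfPlane r, E (ζ + a) = E ζ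
  base : z₀ + s ∈ E '' expHalfPlane r
  period : ∀ ζ ∈ expHalfPlane r, E (ζ + D * (2 * Real.pi * Complex.I)) = E ζ
  log_inside : ∀ b ∈ ball z₀ s, ∀ ℓ : ℂ → ℂ, ContinuousOn ℓ (expHalfPlane r) →
    (∀ ζ ∈ expHalfPlane r, Complex.exp (ℓ ζ) = E ζ - b) → ∀ ζ ∈ expHalfPlane r,
    ℓ (ζ + D * (2 * Real.pi * Complex.I)) = ℓ ζ + σ * (2 * Real.pi * Complex.I)
  log_outside : ∀ b : ℂ, r ≤ dist b z₀ → ∀ ℓ : ℂ → ℂ, ContinuousOn ℓ (expHalfPlane r) →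
    (∀ ζ ∈ expHalfPlane r, Complex.exp (ℓ ζ) = E ζ - b) → ∀ ζ ∈ expHalfPlane r,
    ℓ (ζ + D * (2 * Real.pi * Complex.I)) = ℓ ζ

theorem exists_strip {z₀ : ℂ} {s r : ℝ} (hs : 0 < s) (hsr : s < r) {O : Set ℂ} (hO : IsOpen O)
    (hsub : sphere z₀ s ⊆ O) :
    ∃ S : Set ℂ, IsOpen S ∧ Convex ℝ S ∧ S ⊆ expHalfPlane r ∧ (∀ ζ ∈ S, z₀ + Complex.exp ζ ∈ O) ∧
      ∀ ζ : ℂ, ζ.re = Real.log s → ζ ∈ S := by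
  obtain ⟨δ, hδ, hthick⟩ := (isCompact_sphere z₀ s).exists_thickening_subset_open hO hsub
  have hc : ∀ᶠ x in 𝓝 (Real.log s), Real.exp x ∈ ball s δ ∧ x < Real.log r := by
    refine (Real.continuous_exp.continuousAt.eventually_mem ?_).and
      (eventually_lt_nhds (Real.log_lt_log hs hsr))
    rw [Real.exp_log hs]
    exact ball_mem_nhds s hδ
  obtain ⟨η, hη, hball⟩ := Metric.eventually_nhds_iff_ball.1 hc
  refine ⟨Complex.re ⁻¹' ball (Real.log s) η, isOpen_ball.preimage Complex.continuous_re,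
    (convex_ball _ _).is_linear_preimage Complex.reLm.isLinear, fun ζ hζ ↦ (hball _ hζ).2,
    fun ζ hζ ↦ hthick ?_, fun ζ hζ ↦ by simp [hζ, hη]⟩
  rw [mem_thickening_iff]
  refine ⟨z₀ + s * Complex.exp (ζ.im * Complex.I), by simp [abs_of_pos hs, Complex.norm_exp], ?_⟩
  have h1 := (hball _ hζ).1
  rw [mem_ball, Real.dist_eq] at h1
  have h2 : Complex.exp ζ = Real.exp ζ.re * Complex.exp (ζ.im * Complex.I) := by
    rw [Complex.ofReal_exp, ← Complex.exp_add, Complex.re_add_im]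
  rw [dist_add_left, dist_eq_norm, h2, ← sub_mul, norm_mul, ← Complex.ofReal_sub,
    Complex.norm_real, Complex.norm_exp]
  simpa using h1

theorem re_eq_zero_of_exp_eq_one {a : ℂ} (ha : Complex.exp a = 1) : a.re = 0 := by
  have := congrArg norm ha
  rwa [Complex.norm_exp, norm_one, Real.exp_eq_one_iff] at this

theorem exp_intCast_mul_two_pi (d : ℤ) : Complex.exp (d * (2 * Real.pi * Complex.I)) = 1 :=
  Complex.exp_eq_one_iff.2 ⟨d, rfl⟩

theorem forall_add_eq_of_exp_eq {A : ℂ → ℂ} {r : ℝ} {a c : ℂ} (ha : a.re = 0)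
    (hA : ContinuousOn A (expHalfPlane r))
    (he : ∀ ζ ∈ expHalfPlane r, Complex.exp (A (ζ + a)) = Complex.exp (A ζ)) {ζ₀ : ℂ}
    (hζ₀ : ζ₀ ∈ expHalfPlane r) (h0 : A (ζ₀ + a) = A ζ₀ + c) :
    ∀ ζ ∈ expHalfPlane r, A (ζ + a) = A ζ + c := by
  intro ζ hζ
  have := sub_eq_sub_of_exp_eq (convex_expHalfPlane r).isPreconnected
    (hA.comp (continuous_add_const a).continuousOn fun ζ hζ ↦ add_mem_expHalfPlane hζ ha) hA he
    hζ₀ hζ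
  simp only [Function.comp, h0] at this
  linear_combination this

theorem LiftsHol.exists_windingLift {F : ℂ → ℂ} {X U : Set ℂ} {z₀ : ℂ} {s r : ℝ}
    (hF : LiftsHol F X U) (hXU : X ⊆ U) (hz : z₀ ∉ U) (hr : ball z₀ r \ {z₀} ⊆ U) (hs : 0 < s)
    (hsr : s < r) (hsX : sphere z₀ s ⊆ X) (hFs : ∀ x ∈ sphere z₀ s, F x ∈ ball z₀ r) :
    ∃ D σ E, WindingLift F X z₀ s r D σ E := by
  set τ : ℂ := 2 * Real.pi * Complex.I with hτ
  have hτ0 : τ ≠ 0 := Complex.two_pi_I_ne_zero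
  have hr0 : 0 < r := hs.trans hsr
  set H := expHalfPlane r
  have hHc : Convex ℝ H := convex_expHalfPlane r
  have hHo : IsOpen H := isOpen_expHalfPlane r
  have hO : IsOpen (X ∩ F ⁻¹' ball z₀ r) :=
    hF.differentiableOn.continuousOn.isOpen_inter_preimage hF.isOpen isOpen_ball
  obtain ⟨S, hSo, hSc, hSH, hSO, hSline⟩ := exists_strip hs hsr hO fun x hx ↦ ⟨hsX hx, hFs x hx⟩
  set e : ℂ → ℂ := fun ζ ↦ z₀ + Complex.exp ζ with he
  have hed : Differentiable ℂ e := Complex.differentiable_exp.const_add z₀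
  have heτ : ∀ ζ, e (ζ + τ) = e ζ := fun ζ ↦ by simp only [he, hτ, Complex.exp_periodic ζ]
  have heU : MapsTo e H U := fun ζ hζ ↦ hr (add_const_exp_mem hr0 hζ)
  set ζ₀ : ℂ := ((Real.log s : ℝ) : ℂ) with hζ₀
  have hζ₀S : ζ₀ ∈ S := hSline _ (by simp [hζ₀])
  have hζ₁S : ζ₀ + τ ∈ S := hSline _ (by simp [hζ₀, hτ])
  have hexpζ₀ : Complex.exp ζ₀ = s := by
    rw [hζ₀, ← Complex.ofReal_exp, Real.exp_log hs]
  have heζ₀ : e ζ₀ = z₀ + s := by simp only [he, hexpζ₀]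
  have hge : DifferentiableOn ℂ (fun ζ ↦ F (e ζ) - z₀) S :=
    (hF.differentiableOn.comp hed.differentiableOn fun ζ hζ ↦ (hSO ζ hζ).1).sub_const z₀
  have hg0 : ∀ ζ ∈ S, F (e ζ) - z₀ ≠ 0 := fun ζ hζ h ↦ hz <| by
    rw [← sub_eq_zero.1 h]
    exact hF.mapsTo (hSO ζ hζ).1
  obtain ⟨lam, hlam, -, hlame⟩ := LiftsHol.exists_log hSc hSo hge hg0 hζ₀S
    (Complex.exp_log (hg0 _ hζ₀S))
  have hlamH : MapsTo lam S H := by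
    intro ζ hζ
    rw [mem_expHalfPlane hr0, hlame ζ hζ, ← dist_eq_norm]
    exact (hSO ζ hζ).2
  have hFe : ∀ ζ ∈ S, F (e ζ) = e (lam ζ) := fun ζ hζ ↦ by simp only [he, hlame ζ hζ]; ring
  obtain ⟨E, hEd, hEX, hE0, hEe⟩ := hF.exists_lift H hHc hHo e hed.differentiableOn heU (lam ζ₀)
    (hlamH hζ₀S) (e ζ₀) (hSO ζ₀ hζ₀S).1 (hFe ζ₀ hζ₀S)
  have hElam : ∀ ζ ∈ S, E (lam ζ) = e ζ := hF.eqOn S hSc.isPreconnected (E ∘ lam) e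
    (hEd.continuousOn.comp hlam.continuousOn hlamH) hed.continuous.continuousOn
    (hEX.comp hlamH) (fun ζ hζ ↦ (hSO ζ hζ).1)
    (fun ζ hζ ↦ by rw [hFe ζ hζ, Function.comp, hEe _ (hlamH hζ)]) ζ₀ hζ₀S hE0
  obtain ⟨d, hd⟩ : ∃ d : ℤ, lam (ζ₀ + τ) = lam ζ₀ + d * τ := by
    rw [← Complex.exp_eq_exp_iff_exists_int, hlame _ hζ₁S, hlame _ hζ₀S, heτ]
  have hdτ : ((d : ℂ) * τ).re = 0 := by simp [hτ]
  have hunique : ∀ a : ℂ, Complex.exp a = 1 → (∃ ζ ∈ H, E (ζ + a) = E ζ) →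
      ∀ ζ ∈ H, E (ζ + a) = E ζ := by
    rintro a ha ⟨ζ, hζ, hζe⟩
    have hm : MapsTo (fun x ↦ x + a) H H :=
      fun ζ hζ ↦ add_mem_expHalfPlane hζ (re_eq_zero_of_exp_eq_one ha)
    refine hF.eqOn H hHc.isPreconnected _ E
      (hEd.continuousOn.comp (continuous_add_const a).continuousOn hm) hEd.continuousOn
      (hEX.comp hm) hEX (fun t ht ↦ ?_) ζ hζ hζe
    rw [hEe _ (hm ht), hEe _ ht]
    simp only [he, Complex.exp_add, ha, mul_one]
  have hper : ∀ ζ ∈ H, E (ζ + d * τ) = E ζ := by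
    refine hunique _ (exp_intCast_mul_two_pi d) ⟨lam ζ₀, hlamH hζ₀S, ?_⟩
    rw [← hd, hElam _ hζ₁S, hElam _ hζ₀S, heτ]
  have hin₀ : ∀ b ∈ ball z₀ s, ∀ ℓ : ℂ → ℂ, ContinuousOn ℓ H →
      (∀ ζ ∈ H, Complex.exp (ℓ ζ) = E ζ - b) → ℓ (lam ζ₀ + d * τ) = ℓ (lam ζ₀) + τ := by
    intro b hb ℓ hℓ hℓe
    rw [mem_ball, dist_comm, dist_eq_norm] at hb
    set t := ‖z₀ - b‖
    have ht : 0 ≤ t := norm_nonneg _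
    have hlow := add_two_pi_I_of_exp_eq (m := fun u ↦ 1 + (z₀ - b) * u) (ρ := 2 / (s + t))
      (A := fun ξ ↦ ℓ (lam (-ξ)) + ξ) (S := {ξ : ℂ | ξ.re = -Real.log s}) (ζ := -ζ₀ - τ)
      (by fun_prop) ?_ (convex_hyperplane (f := Complex.re) (r := -Real.log s)
        Complex.reLm.isLinear).isPreconnected ?_ ?_ ?_ ?_ ?_
    · simp only [← hτ] at hlow
      have e1 : -(-ζ₀ - τ + τ) = ζ₀ := by ring
      have e2 : -(-ζ₀ - τ) = ζ₀ + τ := by ring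
      rw [e1, e2, hd] at hlow
      linear_combination -hlow
    · intro u hu h
      rw [mem_ball_zero_iff, lt_div_iff₀ (by positivity)] at hu
      have h1 : ‖(z₀ - b) * u‖ = 1 := by
        rw [show (z₀ - b) * u = -1 by linear_combination h]
        simp
      rw [norm_mul] at h1
      change t * ‖u‖ = 1 at h1
      nlinarith [norm_nonneg u]
    · intro ξ hξ
      rw [mem_ball_zero_iff, Complex.norm_exp, show ξ.re = -Real.log s from hξ, Real.exp_neg,
        Real.exp_log hs, inv_eq_one_div, div_lt_div_iff₀ hs (by positivity)]
      linarith
    · have hneg : MapsTo (fun ξ : ℂ ↦ -ξ) {ξ : ℂ | ξ.re = -Real.log s} S :=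
        fun ξ hξ ↦ hSline _ (by rw [Complex.neg_re, show ξ.re = -Real.log s from hξ, neg_neg])
      exact (hℓ.comp (hlam.continuousOn.comp continuous_neg.continuousOn hneg)
        (hlamH.comp hneg)).add continuousOn_id
    · intro ξ hξ
      have hneg : -ξ ∈ S :=
        hSline _ (by rw [Complex.neg_re, show ξ.re = -Real.log s from hξ, neg_neg])
      rw [Complex.exp_add, hℓe _ (hlamH hneg), hElam _ hneg]
      simp only [he, Complex.exp_neg]
      field_simp [Complex.exp_ne_zero]
      ring
    · simp [hζ₀, hτ]
    · simp [hζ₀, hτ]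
  have hout₀ : ∀ b : ℂ, r ≤ dist b z₀ → ∀ ℓ : ℂ → ℂ, ContinuousOn ℓ H →
      (∀ ζ ∈ H, Complex.exp (ℓ ζ) = E ζ - b) → ℓ (lam ζ₀ + d * τ) = ℓ (lam ζ₀) := by
    intro b hb ℓ hℓ hℓe
    have hlow := add_two_pi_I_of_exp_eq (m := fun u ↦ z₀ - b + u) (ρ := r)
      (A := ℓ ∘ lam) (S := S) (ζ := ζ₀) (by fun_prop) ?_ hSc.isPreconnected
      (fun ξ hξ ↦ mem_ball_zero_iff.2 (norm_exp_lt hr0 (hSH hξ)))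
      (hℓ.comp hlam.continuousOn hlamH) ?_ hζ₀S hζ₁S
    · simpa only [Function.comp, ← hτ, hd] using hlow
    · intro u hu h
      rw [mem_ball_zero_iff] at hu
      rw [dist_eq_norm, show b - z₀ = u by linear_combination -h] at hb
      linarith
    · intro ξ hξ
      rw [Function.comp, hℓe _ (hlamH hξ), hElam _ hξ]
      simp only [he]
      ring
  have hexp : ∀ (b : ℂ) (ℓ : ℂ → ℂ), (∀ ζ ∈ H, Complex.exp (ℓ ζ) = E ζ - b) →
      ∀ ζ ∈ H, Complex.exp (ℓ (ζ + d * τ)) = Complex.exp (ℓ ζ) := by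
    intro b ℓ hℓe ζ hζ
    rw [hℓe _ hζ, hℓe _ (add_mem_expHalfPlane hζ hdτ), hper ζ hζ]
  have hin : ∀ b ∈ ball z₀ s, ∀ ℓ : ℂ → ℂ, ContinuousOn ℓ H →
      (∀ ζ ∈ H, Complex.exp (ℓ ζ) = E ζ - b) → ∀ ζ ∈ H, ℓ (ζ + d * τ) = ℓ ζ + τ :=
    fun b hb ℓ hℓ hℓe ↦ forall_add_eq_of_exp_eq hdτ hℓ (hexp b ℓ hℓe) (hlamH hζ₀S)
      (hin₀ b hb ℓ hℓ hℓe)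
  have hout : ∀ b : ℂ, r ≤ dist b z₀ → ∀ ℓ : ℂ → ℂ, ContinuousOn ℓ H →
      (∀ ζ ∈ H, Complex.exp (ℓ ζ) = E ζ - b) → ∀ ζ ∈ H, ℓ (ζ + d * τ) = ℓ ζ := by
    intro b hb ℓ hℓ hℓe ζ hζ
    simpa using forall_add_eq_of_exp_eq (c := 0) hdτ hℓ (hexp b ℓ hℓe) (hlamH hζ₀S)
      (by simpa using hout₀ b hb ℓ hℓ hℓe) ζ hζ
  have hd0 : d ≠ 0 := by
    rintro rfl
    have hEz : ∀ ζ ∈ H, E ζ - z₀ ≠ 0 := fun ζ hζ h ↦ hz <| by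
      rw [← sub_eq_zero.1 h]
      exact hXU (hEX hζ)
    obtain ⟨L, hL, -, hLe⟩ := LiftsHol.exists_log hHc hHo (hEd.sub_const z₀) hEz (hlamH hζ₀S)
      (Complex.exp_log (hEz _ (hlamH hζ₀S)))
    have := hin₀ z₀ (mem_ball_self hs) L hL.continuousOn hLe
    simp [hτ0] at this
  have hbase : z₀ + s ∈ E '' H := ⟨lam ζ₀, hlamH hζ₀S, by rw [hElam _ hζ₀S, heζ₀]⟩
  rcases lt_or_gt_of_ne hd0 with hneg | hposd
  · have hcast : ((d.natAbs : ℕ) : ℂ) = -d := by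
      rw [← Int.cast_natCast, Int.ofNat_natAbs_of_nonpos hneg.le, Int.cast_neg]
    have hmem : ∀ ζ ∈ H, ζ + -d * τ ∈ H := fun ζ hζ ↦ add_mem_expHalfPlane hζ (by simpa using hdτ)
    have hback : ∀ ζ : ℂ, ζ + -d * τ + d * τ = ζ := fun ζ ↦ by ring
    refine ⟨d.natAbs, -1, E, by simpa using hd0, by norm_num, hEd, hEX, hEe, hunique, hbase, ?_, ?_, ?_⟩
    · intro ζ hζ
      rw [hcast]
      have := hper _ (hmem ζ hζ)
      rw [hback] at this
      exact this.symm
    · intro b hb ℓ hℓ hℓe ζ hζ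
      rw [hcast]
      have := hin b hb ℓ hℓ hℓe _ (hmem ζ hζ)
      rw [hback] at this
      push_cast
      linear_combination -this
    · intro b hb ℓ hℓ hℓe ζ hζ
      rw [hcast]
      have := hout b hb ℓ hℓ hℓe _ (hmem ζ hζ)
      rw [hback] at this
      exact this.symm
  · have hcast : ((d.natAbs : ℕ) : ℂ) = d := by
      rw [← Int.cast_natCast, Int.natAbs_of_nonneg hposd.le]
    refine ⟨d.natAbs, 1, E, by simpa using hd0, by norm_num, hEd, hEX, hEe, hunique, hbase, ?_, ?_, ?_⟩
    · simpa only [hcast] using hper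
    · intro b hb ℓ hℓ hℓe ζ hζ
      rw [hcast, Int.cast_one, one_mul]
      exact hin b hb ℓ hℓ hℓe ζ hζ
    · simpa only [hcast] using hout

theorem isOpen_image_of_injOn {h : ℂ → ℂ} {A N : Set ℂ} (hA : IsOpen A) (hAc : IsPreconnected A)
    (hd : DifferentiableOn ℂ h A) (hinj : InjOn h A) (hN : IsOpen N) (hNA : N ⊆ A) :
    IsOpen (h '' N) := by
  rcases (hd.analyticOnNhd hA).is_constant_or_isOpen hAc with ⟨c, hc⟩ | ho
  · rcases N.eq_empty_or_nonempty with rfl | ⟨z, hz⟩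
    · simp
    · have hev : ∀ᶠ x in 𝓝[≠] z, x ∈ N ∧ x ≠ z :=
        (eventually_nhdsWithin_of_eventually_nhds (hN.mem_nhds hz)).and self_mem_nhdsWithin
      obtain ⟨x, hx, hxz⟩ := hev.exists
      exact absurd (hinj (hNA hx) (hNA hz) (by rw [hc x (hNA hx), hc z (hNA hz)])) hxz
  · exact ho N hNA hN

theorem exp_surj_on_punctured_ball {z : ℂ} {R : ℝ} (hz : z ∈ ball (0 : ℂ) R \ {0}) :
    ∃ ζ ∈ expHalfPlane R, Complex.exp ζ = z := by
  have h0 : 0 < ‖z‖ := norm_pos_iff.2 hz.2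
  have hR : ‖z‖ < R := mem_ball_zero_iff.1 hz.1
  refine ⟨Complex.log z, ?_, Complex.exp_log hz.2⟩
  rw [mem_expHalfPlane (h0.trans hR), Complex.exp_log hz.2]
  exact hR

/-- Iterating a translation rule on a half-plane. -/
theorem add_intCast_mul_eq {A : ℂ → ℂ} {r : ℝ} {a c : ℂ} (ha : a.re = 0)
    (h : ∀ ζ ∈ expHalfPlane r, A (ζ + a) = A ζ + c) (k : ℤ) :
    ∀ ζ ∈ expHalfPlane r, A (ζ + k * a) = A ζ + k * c := by
  induction k using Int.induction_on with
  | zero => simp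
  | succ k ih =>
    intro ζ hζ
    have h1 := h _ (add_mem_expHalfPlane (a := k * a) hζ (by simp [ha]))
    have h2 := ih ζ hζ
    push_cast at h1 h2 ⊢
    rw [show ζ + (k + 1) * a = ζ + k * a + a by ring, h1, h2]
    ring
  | pred k ih =>
    intro ζ hζ
    have h1 := h (ζ + (-k - 1) * a) (add_mem_expHalfPlane hζ (by simp [ha]))
    have h2 := ih ζ hζ
    push_cast at h1 h2 ⊢
    rw [show ζ + (-k - 1) * a + a = ζ + -k * a by ring, h2] at h1
    linear_combination -h1

/-- `h` uniformizes the set obtained by filling the puncture in an inverse image under `F` of the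
punctured disc of radius `r` around `z₀`; in the coordinate `h`, the map `F` is a power. -/
structure PowerChart (F : ℂ → ℂ) (X : Set ℂ) (z₀ : ℂ) (r : ℝ) (D : ℕ) (R : ℝ) (h : ℂ → ℂ) :
    Prop where
  pos : D ≠ 0
  radius_pos : 0 < R
  radius_pow : R ^ D = r
  differentiableOn : DifferentiableOn ℂ h (ball 0 R)
  apply_zero : h 0 = z₀
  injOn : InjOn h (ball 0 R)
  mapsTo : MapsTo h (ball 0 R \ {0}) X
  apply_eq : ∀ z ∈ ball (0 : ℂ) R \ {0}, F (h z) = z₀ + z ^ D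

namespace WindingLift

variable {F : ℂ → ℂ} {X : Set ℂ} {z₀ : ℂ} {s r R : ℝ} {D : ℕ} {σ : ℤ} {E : ℂ → ℂ}

theorem mul_mem (hR : 0 < R) (hRD : R ^ D = r) (hD : D ≠ 0) {ζ : ℂ} :
    D * ζ ∈ expHalfPlane r ↔ ζ ∈ expHalfPlane R := by
  rw [mem_expHalfPlane (hRD ▸ pow_pos hR D), mem_expHalfPlane hR, Complex.exp_nat_mul, norm_pow,
    ← hRD, pow_lt_pow_iff_left₀ (norm_nonneg _) hR.le hD]

theorem sign_ne_zero (hE : WindingLift F X z₀ s r D σ E) : (σ : ℂ) * (2 * Real.pi * Complex.I) ≠ 0 :=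
  mul_ne_zero (Int.cast_ne_zero.2 fun h ↦ by simpa [h] using hE.sign) Complex.two_pi_I_ne_zero

theorem exists_log (hE : WindingLift F X z₀ s r D σ E) {b : ℂ}
    (hb : ∀ ζ ∈ expHalfPlane r, E ζ ≠ b) :
    ∃ L, ContinuousOn L (expHalfPlane r) ∧
      ∀ ζ ∈ expHalfPlane r, Complex.exp (L ζ) = E ζ - b := by
  have h0 : ((Real.log r - 1 : ℝ) : ℂ) ∈ expHalfPlane r := by
    simp only [expHalfPlane, mem_ofPred_eq, Complex.ofReal_re]
    linarith
  obtain ⟨L, hL, -, hLe⟩ := LiftsHol.exists_log (convex_expHalfPlane r) (isOpen_expHalfPlane r)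
    (hE.differentiableOn.sub_const b) (fun ζ hζ ↦ sub_ne_zero.2 (hb ζ hζ)) h0
    (Complex.exp_log (sub_ne_zero.2 (hb _ h0)))
  exact ⟨L, hL.continuousOn, hLe⟩

/-- The map `h` with `h ∘ exp = E ∘ (D · )`. -/
theorem exists_root (hE : WindingLift F X z₀ s r D σ E) (hz : z₀ ∉ X) (hs : 0 < s)
    (hR : 0 < R) (hRD : R ^ D = r) :
    ∃ h : ℂ → ℂ, (∀ ζ ∈ expHalfPlane R, h (Complex.exp ζ) = E (D * ζ)) ∧
      DifferentiableOn ℂ h (ball 0 R \ {0}) ∧ InjOn h (ball 0 R \ {0}) ∧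
      MapsTo h (ball 0 R \ {0}) X ∧ ∀ z ∈ ball (0 : ℂ) R \ {0}, F (h z) = z₀ + z ^ D := by
  have hm : ∀ {ζ : ℂ}, D * ζ ∈ expHalfPlane r ↔ ζ ∈ expHalfPlane R := mul_mem hR hRD hE.pos
  have hDτ : ((D : ℂ) * (2 * Real.pi * Complex.I)).re = 0 := by simp
  have hkey : ∀ ζ ∈ expHalfPlane R, E (D * Complex.log (Complex.exp ζ)) = E (D * ζ) := by
    intro ζ hζ
    obtain ⟨k, hk⟩ := Complex.exp_eq_exp_iff_exists_int.1
      (Complex.exp_log (Complex.exp_ne_zero ζ))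
    have := add_intCast_mul_eq (A := E) (c := 0) hDτ (fun ζ hζ ↦ by rw [hE.period ζ hζ, add_zero]) k
      (D * ζ) (hm.2 hζ)
    rw [hk, ← add_zero (E (D * ζ)), ← mul_zero (k : ℂ), ← this]
    ring_nf
  refine ⟨fun z ↦ E (D * Complex.log z), hkey, ?_, ?_, ?_, ?_⟩
  · intro z hz'
    have hlog : DifferentiableAt ℂ (fun u ↦ (D : ℂ) * (Complex.log (u / z) + Complex.log z)) z := by
      refine ((DifferentiableAt.clog (by fun_prop) ?_).add_const _).const_mul _
      rw [div_self hz'.2]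
      exact Complex.one_mem_slitPlane
    have hlogz : Complex.log z ∈ expHalfPlane R := by
      rw [mem_expHalfPlane hR, Complex.exp_log hz'.2]
      exact mem_ball_zero_iff.1 hz'.1
    have hEd : DifferentiableAt ℂ E (D * (Complex.log (z / z) + Complex.log z)) := by
      refine hE.differentiableOn.differentiableAt ((isOpen_expHalfPlane r).mem_nhds (hm.2 ?_))
      rw [div_self hz'.2, Complex.log_one, zero_add]
      exact hlogz
    have hcomp := (DifferentiableAt.comp z hEd hlog).differentiableWithinAt
      (s := ball 0 R \ {0})
    refine hcomp.congr (fun u hu ↦ ?_) ?_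
    · have he : Complex.exp (Complex.log (u / z) + Complex.log z) = u := by
        rw [Complex.exp_add, Complex.exp_log (div_ne_zero hu.2 hz'.2), Complex.exp_log hz'.2,
          div_mul_cancel₀ _ hz'.2]
      have := hkey (Complex.log (u / z) + Complex.log z) (by
        rw [mem_expHalfPlane hR, he]
        exact mem_ball_zero_iff.1 hu.1)
      rwa [he] at this
    · simp [div_self hz'.2]
  · intro z₁ h₁ z₂ h₂ h12
    obtain ⟨ζ₁, hζ₁, rfl⟩ := exp_surj_on_punctured_ball h₁
    obtain ⟨ζ₂, hζ₂, rfl⟩ := exp_surj_on_punctured_ball h₂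
    simp only [hkey _ hζ₁, hkey _ hζ₂] at h12
    have hF := congrArg F h12
    rw [hE.apply_eq _ (hm.2 hζ₁), hE.apply_eq _ (hm.2 hζ₂), add_right_inj,
      Complex.exp_eq_exp_iff_exists_int] at hF
    obtain ⟨j, hj⟩ := hF
    have haj : Complex.exp (j * (2 * Real.pi * Complex.I)) = 1 := exp_intCast_mul_two_pi j
    have hjre : ((j : ℂ) * (2 * Real.pi * Complex.I)).re = 0 := by simp
    rw [hj] at h12
    have hper := hE.unique _ haj ⟨_, hm.2 hζ₂, h12⟩
    have hne : ∀ ζ ∈ expHalfPlane r, E ζ ≠ z₀ := fun ζ hζ h ↦ hz (h ▸ hE.mapsTo hζ)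
    obtain ⟨L, hL, hLe⟩ := hE.exists_log hne
    have hLj : ∀ ζ ∈ expHalfPlane r,
        Complex.exp (L (ζ + j * (2 * Real.pi * Complex.I))) = Complex.exp (L ζ) := fun ζ hζ ↦ by
      rw [hLe _ hζ, hLe _ (add_mem_expHalfPlane hζ hjre), hper ζ hζ]
    obtain ⟨q, hq⟩ := Complex.exp_eq_exp_iff_exists_int.1 (hLj _ (hm.2 hζ₂))
    have h3 := add_intCast_mul_eq hjre (forall_add_eq_of_exp_eq hjre hL hLj (hm.2 hζ₂) hq) D _
      (hm.2 hζ₂)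
    have h4 := add_intCast_mul_eq hDτ (hE.log_inside z₀ (mem_ball_self hs) L hL hLe) j _
      (hm.2 hζ₂)
    have h5 : (D : ℂ) * q = j * σ := by
      have h6 : (D : ℂ) * ζ₂ + ((D : ℤ) : ℂ) * (j * (2 * Real.pi * Complex.I)) =
          D * ζ₂ + j * (D * (2 * Real.pi * Complex.I)) := by push_cast; ring
      rw [h6, h4] at h3
      have := Complex.two_pi_I_ne_zero
      apply mul_right_cancel₀ this
      push_cast at h3
      linear_combination -h3
    have hσ : (σ : ℂ) * σ = 1 := by exact_mod_cast hE.sign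
    have hD : (D : ℂ) ≠ 0 := Nat.cast_ne_zero.2 hE.pos
    refine Complex.exp_eq_exp_iff_exists_int.2 ⟨q * σ, mul_left_cancel₀ hD ?_⟩
    push_cast
    rw [hj]
    linear_combination (-(2 * Real.pi * Complex.I * σ)) * h5 -
      j * (2 * Real.pi * Complex.I) * hσ
  · intro z hz'
    obtain ⟨ζ, hζ, rfl⟩ := exp_surj_on_punctured_ball hz'
    simp only [hkey _ hζ]
    exact hE.mapsTo (hm.2 hζ)
  · intro z hz'
    obtain ⟨ζ, hζ, rfl⟩ := exp_surj_on_punctured_ball hz'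
    simp only [hkey _ hζ]
    rw [hE.apply_eq _ (hm.2 hζ), Complex.exp_nat_mul]

/-- The winding number of `E - b` obstructs holomorphic extension without value `b`. -/
theorem mem_image_of_extends (hE : WindingLift F X z₀ s r D σ E) (hR : 0 < R) (hRD : R ^ D = r)
    {h : ℂ → ℂ} (hh : DifferentiableOn ℂ h (ball 0 R))
    (hhE : ∀ ζ ∈ expHalfPlane R, h (Complex.exp ζ) = E (D * ζ)) {b : ℂ} (hb : b ∈ ball z₀ s) :
    b ∈ h '' ball 0 R := by
  have hm : ∀ {ζ : ℂ}, D * ζ ∈ expHalfPlane r ↔ ζ ∈ expHalfPlane R := mul_mem hR hRD hE.pos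
  have hD : (D : ℂ) ≠ 0 := Nat.cast_ne_zero.2 hE.pos
  have hexp : MapsTo Complex.exp (expHalfPlane R) (ball 0 R) :=
    fun ζ hζ ↦ mem_ball_zero_iff.2 (norm_exp_lt hR hζ)
  by_contra hbn
  have hne : ∀ z ∈ ball (0 : ℂ) R, h z ≠ b := fun z hz h0 ↦ hbn ⟨z, hz, h0⟩
  obtain ⟨L, hL, hLe⟩ := hE.exists_log (b := b) fun ζ hζ ↦ by
    have hζ' : ζ / D ∈ expHalfPlane R := hm.1 (by rwa [mul_div_cancel₀ _ hD])
    have := hhE _ hζ'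
    rw [mul_div_cancel₀ _ hD] at this
    exact this ▸ hne _ (hexp hζ')
  have h0 : ((Real.log R - 1 : ℝ) : ℂ) ∈ expHalfPlane R := by
    simp only [expHalfPlane, mem_ofPred_eq, Complex.ofReal_re]
    linarith
  have h1 := add_two_pi_I_of_exp_eq (m := fun z ↦ h z - b) (A := fun ζ ↦ L (D * ζ))
    (hh.sub_const b) (fun z hz ↦ sub_ne_zero.2 (hne z hz)) (convex_expHalfPlane R).isPreconnected
    hexp (hL.comp (by fun_prop) fun ζ hζ ↦ hm.2 hζ)
    (fun ζ hζ ↦ by rw [hLe _ (hm.2 hζ), hhE _ hζ]) h0 (add_mem_expHalfPlane h0 (by simp))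
  have h2 := hE.log_inside b hb L hL hLe _ (hm.2 h0)
  rw [← mul_add, h1] at h2
  exact hE.sign_ne_zero (by linear_combination -h2)

theorem exists_powerChart (hE : WindingLift F X z₀ s r D σ E) (hr : 0 < r) (hs : 0 < s)
    (hz : z₀ ∉ X) {b₀ : ℂ} (hb₀ : r ≤ dist b₀ z₀) (hEb₀ : ∀ ζ ∈ expHalfPlane r, E ζ ≠ b₀) :
    ∃ R h, PowerChart F X z₀ r D R h ∧ ball z₀ s ⊆ h '' ball 0 R := by
  obtain ⟨R, hR, hRD⟩ : ∃ R : ℝ, 0 < R ∧ R ^ D = r :=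
    ⟨r ^ (D : ℝ)⁻¹, Real.rpow_pos_of_pos hr _, Real.rpow_inv_natCast_pow hr.le hE.pos⟩
  have hm : ∀ {ζ : ℂ}, D * ζ ∈ expHalfPlane r ↔ ζ ∈ expHalfPlane R := mul_mem hR hRD hE.pos
  obtain ⟨h, hhE, hhd, hinj, hhX, hhF⟩ := hE.exists_root hz hs hR hRD
  have hexpR : MapsTo Complex.exp (expHalfPlane R) (ball 0 R) :=
    fun ζ hζ ↦ mem_ball_zero_iff.2 (norm_exp_lt hR hζ)
  have hz₀ : z₀ ∈ ball z₀ s := mem_ball_self hs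
  suffices hlim : Tendsto h (𝓝[≠] 0) (𝓝 z₀) by
    have hupd : ∀ z ∈ ball (0 : ℂ) R \ {0}, Function.update h 0 z₀ z = h z :=
      fun z hz ↦ Function.update_of_ne hz.2 _ _
    have hd : DifferentiableOn ℂ (Function.update h 0 z₀) (ball 0 R) := by
      refine (Complex.differentiableOn_compl_singleton_and_continuousAt_iff
        (ball_mem_nhds 0 hR)).1 ⟨hhd.congr hupd, ?_⟩
      rwa [continuousAt_update_same]
    have hne : ∀ z ∈ ball (0 : ℂ) R \ {0}, h z ≠ z₀ := fun z hz' h0 ↦ hz (h0 ▸ hhX hz')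
    refine ⟨R, Function.update h 0 z₀, ⟨hE.pos, hR, hRD, hd, Function.update_self .., ?_,
      fun z hz ↦ by rw [hupd z hz]; exact hhX hz, fun z hz ↦ by rw [hupd z hz, hhF z hz]⟩,
      fun b hb ↦ hE.mem_image_of_extends hR hRD hd (fun ζ hζ ↦ ?_) hb⟩
    · intro x hx y hy hxy
      by_cases hx0 : x = 0 <;> by_cases hy0 : y = 0
      · rw [hx0, hy0]
      · rw [hx0, Function.update_self, hupd y ⟨hy, hy0⟩] at hxy
        exact absurd hxy.symm (hne y ⟨hy, hy0⟩)
      · rw [hy0, Function.update_self, hupd x ⟨hx, hx0⟩] at hxy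
        exact absurd hxy (hne x ⟨hx, hx0⟩)
      · rw [hupd x ⟨hx, hx0⟩, hupd y ⟨hy, hy0⟩] at hxy
        exact hinj ⟨hx, hx0⟩ ⟨hy, hy0⟩ hxy
    · rw [hupd _ ⟨hexpR hζ, Complex.exp_ne_zero ζ⟩, hhE ζ hζ]
  obtain ⟨b, ε, hε, hfar⟩ : ∃ b : ℂ, ∃ ε > 0, ∀ z ∈ ball (0 : ℂ) (R / 4) \ {0}, ε ≤ dist (h z) b := by
    have hsub : ball ((R / 2 : ℝ) : ℂ) (R / 4) ⊆ ball 0 R \ {0} := by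
      intro z hz
      have h2 : ‖((R / 2 : ℝ) : ℂ)‖ = R / 2 := by
        rw [Complex.norm_real, Real.norm_of_nonneg (by positivity)]
      rw [mem_ball, dist_eq_norm] at hz
      have h3 := norm_sub_norm_le z ((R / 2 : ℝ) : ℂ)
      have h4 := norm_sub_norm_le ((R / 2 : ℝ) : ℂ) z
      rw [norm_sub_rev] at h4
      refine ⟨mem_ball_zero_iff.2 (by linarith), fun h0 ↦ ?_⟩
      obtain rfl := mem_singleton_iff.1 h0
      rw [norm_zero] at h4
      linarith
    have hmem : ((R / 2 : ℝ) : ℂ) ∈ ball ((R / 2 : ℝ) : ℂ) (R / 4) := mem_ball_self (by positivity)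
    have himg : IsOpen (h '' ball ((R / 2 : ℝ) : ℂ) (R / 4)) :=
      isOpen_image_of_injOn isOpen_ball (convex_ball _ _).isPreconnected (hhd.mono hsub)
        (hinj.mono hsub) isOpen_ball subset_rfl
    obtain ⟨ε, hε, hball⟩ := Metric.isOpen_iff.1 himg _ (mem_image_of_mem h hmem)
    refine ⟨h ((R / 2 : ℝ) : ℂ), ε, hε, fun z hz ↦ ?_⟩
    by_contra! hlt
    obtain ⟨y, hy, hyz⟩ := hball (mem_ball.2 hlt)
    have hzR : z ∈ ball (0 : ℂ) R \ {0} := ⟨ball_subset_ball (by linarith) hz.1, hz.2⟩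
    have := hinj (hsub hy) hzR hyz
    subst this
    rw [mem_ball, dist_eq_norm] at hy
    have h1 := mem_ball_zero_iff.1 hz.1
    have h4 := norm_sub_norm_le ((R / 2 : ℝ) : ℂ) y
    rw [norm_sub_rev, Complex.norm_real, Real.norm_of_nonneg (by positivity)] at h4
    linarith
  have hR4 : (0 : ℝ) < R / 4 := by positivity
  have hsub4 : ball (0 : ℂ) (R / 4) \ {0} ⊆ ball 0 R \ {0} :=
    sdiff_subset_sdiff_left (ball_subset_ball (by linarith))
  have hhb : ∀ z ∈ ball (0 : ℂ) (R / 4) \ {0}, h z - b ≠ 0 := fun z hz h0 ↦ by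
    have := hfar z hz
    rw [dist_eq_norm, h0, norm_zero] at this
    linarith
  set k : ℂ → ℂ := fun z ↦ (h z - b)⁻¹ with hk
  have hkd : DifferentiableOn ℂ k (ball 0 (R / 4) \ {0}) :=
    ((hhd.mono hsub4).sub_const b).inv hhb
  have hkb : BddAbove (norm ∘ k '' (ball 0 (R / 4) \ {0})) := by
    refine ⟨ε⁻¹, ?_⟩
    rintro _ ⟨z, hz, rfl⟩
    simp only [hk, Function.comp, norm_inv]
    have := hfar z hz
    rw [dist_eq_norm] at this
    exact inv_anti₀ hε this
  have hkd' := Complex.differentiableOn_update_limUnder_of_bddAbove (ball_mem_nhds 0 hR4) hkd hkb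
  set c := limUnder (𝓝[≠] 0) k with hc
  have hklim : Tendsto k (𝓝[≠] 0) (𝓝 c) := by
    rw [← continuousAt_update_same]
    exact hkd'.continuousOn.continuousAt (ball_mem_nhds 0 hR4)
  have hupdk : ∀ z ∈ ball (0 : ℂ) (R / 4) \ {0}, Function.update k 0 c z = k z :=
    fun z hz ↦ Function.update_of_ne hz.2 _ _
  by_cases hc0 : c = 0
  · exfalso
    have hne : ∀ ζ ∈ expHalfPlane r, E ζ ≠ z₀ := fun ζ hζ h0 ↦ hz (h0 ▸ hE.mapsTo hζ)
    obtain ⟨L, hL, hLe⟩ := hE.exists_log hne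
    obtain ⟨L₀, hL₀, hL₀e⟩ := hE.exists_log hEb₀
    have hsubH : expHalfPlane (R / 4) ⊆ expHalfPlane R := fun ζ hζ ↦ by
      rw [mem_expHalfPlane hR]
      exact (norm_exp_lt hR4 hζ).trans (by linarith)
    have hexp4 : ∀ ζ ∈ expHalfPlane (R / 4), Complex.exp ζ ∈ ball (0 : ℂ) (R / 4) \ {0} :=
      fun ζ hζ ↦ ⟨mem_ball_zero_iff.2 (norm_exp_lt hR4 hζ), Complex.exp_ne_zero ζ⟩
    have hfac : ∀ a : ℂ, ∀ z ∈ ball (0 : ℂ) (R / 4) \ {0}, 1 + (b - a) * k z = k z * (h z - a) := by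
      intro a z hz
      have := inv_mul_cancel₀ (hhb z hz)
      change k z * (h z - b) = 1 at this
      linear_combination -this
    have hnz : ∀ a : ℂ, (∀ z ∈ ball (0 : ℂ) (R / 4) \ {0}, h z ≠ a) →
        ∀ z ∈ ball (0 : ℂ) (R / 4), 1 + (b - a) * Function.update k 0 c z ≠ 0 := by
      intro a ha z hz
      by_cases hz0 : z = 0
      · simp [hz0, hc0]
      · rw [hupdk z ⟨hz, hz0⟩, hfac a z ⟨hz, hz0⟩]
        exact mul_ne_zero (inv_ne_zero (hhb z ⟨hz, hz0⟩)) (sub_ne_zero.2 (ha z ⟨hz, hz0⟩))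
    have hnz₀ := hnz z₀ fun z hz' h0 ↦ hz (h0 ▸ hhX (hsub4 hz'))
    have hnzb := hnz b₀ fun z hz' ↦ by
      obtain ⟨ζ, hζ, rfl⟩ := exp_surj_on_punctured_ball (hsub4 hz')
      rw [hhE ζ hζ]
      exact hEb₀ _ (hm.2 hζ)
    have h0 : ((Real.log (R / 4) - 1 : ℝ) : ℂ) ∈ expHalfPlane (R / 4) := by
      simp only [expHalfPlane, mem_ofPred_eq, Complex.ofReal_re]
      linarith
    have h1 := add_two_pi_I_of_exp_eq (ρ := R / 4)
      (m := fun z ↦ (1 + (b - z₀) * Function.update k 0 c z) /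
        (1 + (b - b₀) * Function.update k 0 c z))
      (A := fun ζ ↦ L (D * ζ) - L₀ (D * ζ))
      (((hkd'.const_mul _).const_add _).div ((hkd'.const_mul _).const_add _) hnzb)
      (fun z hz ↦ div_ne_zero (hnz₀ z hz) (hnzb z hz)) (convex_expHalfPlane (R / 4)).isPreconnected
      (fun ζ hζ ↦ (hexp4 ζ hζ).1)
      ((hL.comp (by fun_prop) fun ζ hζ ↦ hm.2 (hsubH hζ)).sub
        (hL₀.comp (by fun_prop) fun ζ hζ ↦ hm.2 (hsubH hζ)))
      (fun ζ hζ ↦ by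
        rw [Complex.exp_sub, hLe _ (hm.2 (hsubH hζ)), hL₀e _ (hm.2 (hsubH hζ)),
          hupdk _ (hexp4 ζ hζ), hfac z₀ _ (hexp4 ζ hζ), hfac b₀ _ (hexp4 ζ hζ),
          mul_div_mul_left _ _ (inv_ne_zero (hhb _ (hexp4 ζ hζ))), hhE ζ (hsubH hζ)])
      h0 (add_mem_expHalfPlane h0 (by simp))
    have h2 := hE.log_inside z₀ hz₀ L hL hLe _ (hm.2 (hsubH h0))
    have h3 := hE.log_outside b₀ hb₀ L₀ hL₀ hL₀e _ (hm.2 (hsubH h0))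
    simp only [mul_add] at h1
    exact hE.sign_ne_zero (by linear_combination -h2 + h3 + h1)
  · have hlim : Tendsto h (𝓝[≠] 0) (𝓝 (b + c⁻¹)) := by
      have := (hklim.inv₀ hc0).const_add b
      refine this.congr fun z ↦ ?_
      simp [hk]
    suffices b + c⁻¹ = z₀ by rwa [this] at hlim
    have hupd : ∀ z ∈ ball (0 : ℂ) R \ {0}, Function.update h 0 (b + c⁻¹) z = h z :=
      fun z hz ↦ Function.update_of_ne hz.2 _ _
    have hd : DifferentiableOn ℂ (Function.update h 0 (b + c⁻¹)) (ball 0 R) := by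
      refine (Complex.differentiableOn_compl_singleton_and_continuousAt_iff
        (ball_mem_nhds 0 hR)).1 ⟨hhd.congr hupd, ?_⟩
      rwa [continuousAt_update_same]
    obtain ⟨z, hzR, hzz⟩ := hE.mem_image_of_extends hR hRD hd (fun ζ hζ ↦ by
      rw [hupd _ ⟨hexpR hζ, Complex.exp_ne_zero ζ⟩, hhE ζ hζ]) hz₀
    by_cases hz0 : z = 0
    · rw [hz0, Function.update_self] at hzz
      exact hzz
    · rw [hupd z ⟨hzR, hz0⟩] at hzz
      exact absurd (hzz ▸ hhX ⟨hzR, hz0⟩) hz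

end WindingLift

/-- If `F` covers a set surrounding the puncture `z₀`, and maps a circle around `z₀` into the
punctured disc around `z₀`, then the preimage of that punctured disc encircled by the circle is
itself a punctured disc, on which `F` is a power. -/
theorem LiftsHol.exists_powerChart {F : ℂ → ℂ} {X U : Set ℂ} {z₀ : ℂ} {s r : ℝ}
    (hF : LiftsHol F X U) (hXU : X ⊆ U) (hz : z₀ ∉ U) (hr : ball z₀ r \ {z₀} ⊆ U) {b₀ : ℂ}
    (hb₀ : r ≤ dist b₀ z₀) (hs : 0 < s) (hb₀U : b₀ ∉ connectedComponentIn U (z₀ + s))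
    (hsr : s < r) (hsX : sphere z₀ s ⊆ X) (hFs : ∀ x ∈ sphere z₀ s, F x ∈ ball z₀ r) :
    ∃ D R h, PowerChart F X z₀ r D R h ∧ ball z₀ s ⊆ h '' ball 0 R := by
  obtain ⟨D, σ, E, hE⟩ := hF.exists_windingLift hXU hz hr hs hsr hsX hFs
  have hsub : E '' expHalfPlane r ⊆ connectedComponentIn U (z₀ + s) :=
    ((convex_expHalfPlane r).isPreconnected.image _
      hE.differentiableOn.continuousOn).subset_connectedComponentIn hE.base
      (hE.mapsTo.image_subset.trans hXU)
  exact ⟨D, hE.exists_powerChart (hs.trans hsr) hs (fun h ↦ hz (hXU h)) hb₀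
    fun ζ hζ h ↦ hb₀U (h ▸ hsub ⟨ζ, hζ, rfl⟩)⟩

/-- `U` contains a punctured disc around `z₀ ∉ U`, and the component of `U` containing it omits a
further point `b₀`. -/
structure IsPuncture (U : Set ℂ) (z₀ : ℂ) (r : ℝ) (b₀ : ℂ) : Prop where
  notMem : z₀ ∉ U
  radius_pos : 0 < r
  subset : ball z₀ r \ {z₀} ⊆ U
  le_dist : r ≤ dist b₀ z₀
  notMem_component : ∀ z ∈ ball z₀ r \ {z₀}, b₀ ∉ connectedComponentIn U z

theorem image_expHalfPlane {z₀ : ℂ} {r : ℝ} (hr : 0 < r) :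
    (fun ζ ↦ z₀ + Complex.exp ζ) '' expHalfPlane r = ball z₀ r \ {z₀} := by
  ext z
  constructor
  · rintro ⟨ζ, hζ, rfl⟩
    exact add_const_exp_mem hr hζ
  · rintro ⟨hz, hz0⟩
    obtain ⟨ζ, hζ, he⟩ := exp_surj_on_punctured_ball (R := r) (z := z - z₀)
      ⟨by rwa [mem_ball_zero_iff, ← dist_eq_norm], sub_ne_zero.2 hz0⟩
    exact ⟨ζ, hζ, by simp [he]⟩

theorem isPreconnected_punctured_ball {z₀ : ℂ} {r : ℝ} (hr : 0 < r) :
    IsPreconnected (ball z₀ r \ {z₀}) := by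
  rw [← image_expHalfPlane hr]
  exact (convex_expHalfPlane r).isPreconnected.image _ (by fun_prop)

theorem HyperbolicOpen.exists_isPuncture {U : Set ℂ} (hU : HyperbolicOpen U) {z₀ : ℂ}
    (h : ∃ N ∈ 𝓝 z₀, N ∩ Uᶜ = {z₀}) : ∃ r b₀, IsPuncture U z₀ r b₀ := by
  obtain ⟨N, hN, hNU⟩ := h
  obtain ⟨r, hr, hrN⟩ := Metric.mem_nhds_iff.1 hN
  have hz₀ : z₀ ∉ U := (hNU.symm ▸ mem_singleton z₀ : z₀ ∈ N ∩ Uᶜ).2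
  have hsub : ball z₀ r \ {z₀} ⊆ U := by
    intro z hz
    by_contra hzU
    exact hz.2 (hNU ▸ ⟨hrN hz.1, hzU⟩ : z ∈ ({z₀} : Set ℂ))
  obtain ⟨z₁, hz₁⟩ : (ball z₀ r \ {z₀}).Nonempty := by
    rw [← image_expHalfPlane hr]
    refine Set.Nonempty.image _ ⟨((Real.log r - 1 : ℝ) : ℂ), ?_⟩
    simp only [expHalfPlane, mem_ofPred_eq, Complex.ofReal_re]
    linarith
  have hcomp : ∀ z ∈ ball z₀ r \ {z₀}, ball z₀ r \ {z₀} ⊆ connectedComponentIn U z :=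
    fun z hz ↦ (isPreconnected_punctured_ball hr).subset_connectedComponentIn hz hsub
  obtain ⟨b₀, hb₀, hne⟩ := (hU.2 z₁ (hsub hz₁)).exists_ne z₀
  refine ⟨r, b₀, hz₀, hr, hsub, ?_, fun z hz hb ↦ hb₀ ?_⟩
  · by_contra! hlt
    exact hb₀ (hcomp z₁ hz₁ ⟨mem_ball.2 hlt, hne⟩)
  · rwa [connectedComponentIn_eq (hcomp z hz hz₁)] at hb

/-- Small circles around a puncture are short in the hyperbolic metric. -/
theorem CenteredCover.exists_circle {U : Set ℂ} {ρ : ℂ → ℝ} {x z₀ : ℂ} {ψ : ℂ → ℂ} {r : ℝ}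
    (hψ : CenteredCover U ρ x ψ) (hr : 0 < r) (hrU : ball z₀ r \ {z₀} ⊆ U)
    (hx : x ≠ z₀) (hxr : dist x z₀ < r * Real.exp (-16)) :
    ∃ κ ⊆ ball (0 : ℂ) (1 / 2), IsCompact κ ∧ IsPreconnected κ ∧ 0 ∈ κ ∧
      ψ '' κ = sphere z₀ (dist x z₀) := by
  set ζ₀ := Complex.log (x - z₀) with hζ₀
  have hexp : Complex.exp ζ₀ = x - z₀ := Complex.exp_log (sub_ne_zero.2 hx)
  have hpos : 0 < dist x z₀ := dist_pos.2 hx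
  have hre : ζ₀.re = Real.log (dist x z₀) := by rw [hζ₀, Complex.log_re, dist_eq_norm]
  have hlog : ζ₀.re + 16 < Real.log r := by
    have := Real.log_lt_log hpos hxr
    rw [Real.log_mul hr.ne' (Real.exp_pos _).ne', Real.log_exp] at this
    linarith
  have hball : ball ζ₀ 16 ⊆ expHalfPlane r := by
    intro ζ hζ
    have h1 := (Complex.abs_re_le_norm (ζ - ζ₀)).trans_lt (mem_ball_iff_norm.1 hζ)
    rw [Complex.sub_re, abs_lt] at h1
    change ζ.re < Real.log r
    linarith
  have hmem : ζ₀ ∈ expHalfPlane r := hball (mem_ball_self (by norm_num))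
  obtain ⟨θ, hθd, hθm, hθ0, hθe⟩ := hψ.liftsHol.exists_lift (expHalfPlane r) (convex_expHalfPlane r)
    (isOpen_expHalfPlane r) (fun ζ ↦ z₀ + Complex.exp ζ) (by fun_prop)
    (fun ζ hζ ↦ hrU (add_const_exp_mem hr hζ)) ζ₀ hmem 0 (mem_ball_self one_pos)
    (by rw [hψ.apply_zero, hexp]; ring)
  set c : ℝ → ℂ := fun t ↦ ζ₀ + t * Complex.I with hc
  have hcd : ∀ t ∈ Icc 0 (2 * Real.pi), dist (c t) ζ₀ < 8 := by
    intro t ht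
    have h1 : dist (c t) ζ₀ = |t| := by simp [hc]
    rw [h1, abs_of_nonneg ht.1]
    linarith [ht.2, Real.pi_lt_four]
  have hcH : MapsTo c (Icc 0 (2 * Real.pi)) (expHalfPlane r) :=
    fun t ht ↦ hball (mem_ball.2 ((hcd t ht).trans (by norm_num)))
  have hcc : ContinuousOn (θ ∘ c) (Icc 0 (2 * Real.pi)) :=
    hθd.continuousOn.comp (by fun_prop) hcH
  refine ⟨(θ ∘ c) '' Icc 0 (2 * Real.pi), ?_, isCompact_Icc.image_of_continuousOn hcc,
    isPreconnected_Icc.image _ hcc, ⟨0, ⟨le_rfl, by positivity⟩, by simp [hc, hθ0]⟩, ?_⟩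
  · rintro _ ⟨t, ht, rfl⟩
    have h1 := Complex.dist_le_div_mul_dist_of_mapsTo_ball (R₁ := 16) (R₂ := 1)
      (hθd.mono hball) (by
        rw [hθ0]
        exact (hθm.mono_left hball).mono_right ball_subset_closedBall)
      (mem_ball.2 ((hcd t ht).trans (by norm_num)))
    rw [hθ0] at h1
    have h2 := hcd t ht
    rw [mem_ball, Function.comp]
    linarith
  · have hval : ∀ t ∈ Icc 0 (2 * Real.pi),
        ψ ((θ ∘ c) t) = z₀ + (x - z₀) * Complex.exp (t * Complex.I) := by
      intro t ht
      rw [Function.comp, hθe _ (hcH ht), hc, Complex.exp_add, hexp]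
    rw [image_image]
    ext y
    rw [mem_sphere, dist_eq_norm]
    constructor
    · rintro ⟨t, ht, rfl⟩
      change ‖ψ ((θ ∘ c) t) - z₀‖ = dist x z₀
      rw [hval t ht, dist_eq_norm]
      simp [Complex.norm_exp_ofReal_mul_I]
    · intro hy
      set q := (y - z₀) / (x - z₀) with hq
      have hqn : ‖q‖ = 1 := by
        rw [hq, norm_div, hy, dist_eq_norm, div_self (by rwa [← dist_eq_norm, dist_ne_zero])]
      have hmod : toIcoMod Real.two_pi_pos 0 (Complex.arg q) ∈ Icc 0 (2 * Real.pi) := by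
        have := toIcoMod_mem_Ico Real.two_pi_pos 0 (Complex.arg q)
        rw [zero_add] at this
        exact Ico_subset_Icc_self this
      refine ⟨_, hmod, (hval _ hmod).trans ?_⟩
      have h1 : Complex.exp ((toIcoMod Real.two_pi_pos 0 (Complex.arg q) : ℝ) * Complex.I) = q := by
        conv_rhs => rw [← Complex.norm_mul_exp_arg_mul_I q, hqn]
        rw [toIcoMod, Complex.ofReal_one, one_mul, Complex.exp_eq_exp_iff_exists_int]
        refine ⟨-toIcoDiv Real.two_pi_pos 0 (Complex.arg q), ?_⟩
        push_cast [zsmul_eq_mul]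
        ring
      rw [h1, hq, mul_div_cancel₀ _ (sub_ne_zero.2 hx)]
      ring

theorem ExpandingCovering.eventually_exists_circle {f : ℂ → ℂ} {U' U : Set ℂ} {ρ : ℂ → ℝ}
    (hf : ExpandingCovering f U' U ρ) {w z₀ : ℂ} (hw : w ∈ stableSet f U') {r : ℝ} {b₀ : ℂ}
    (hz : IsPuncture U z₀ r b₀) :
    ∀ᶠ n in atTop, dist (f^[n] w) z₀ < r * Real.exp (-16) →
      ∃ K ⊆ connectedComponentIn (stableSet f U') w, IsCompact K ∧
        f^[n] '' K = sphere z₀ (dist (f^[n] w) z₀) := by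
  have hwU : ∀ n, f^[n] w ∈ U := fun n ↦ hf.stableSet_subset (hf.mapsTo_stableSet n hw)
  choose ψ hψ using fun n ↦ hf.density.exists_centeredCover hf.isOpen (hwU n)
  filter_upwards [hf.eventually_image_ball_subset hw one_half_pos one_half_lt_one hψ] with n hn hd
  obtain ⟨κ, hκ, hκc, hκp, hκ0, hκe⟩ := (hψ n).exists_circle hz.radius_pos hz.subset
    (fun h ↦ hz.notMem (h ▸ hwU n)) hd
  obtain ⟨π, hπd, hπm, hπ0, hπe⟩ := hf.exists_centered_lift
    (hf.stableSet_subset_iterDomain n hw) (hψ n)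
  have hκ1 : κ ⊆ ball 0 1 := hκ.trans (ball_subset_ball one_half_lt_one.le)
  have hπκ : ContinuousOn π κ := hπd.continuousOn.mono hκ1
  refine ⟨π '' κ, ?_, hκc.image_of_continuousOn hπκ, ?_⟩
  · refine (hκp.image π hπκ).subset_connectedComponentIn ⟨0, hκ0, hπ0⟩ ?_
    rintro _ ⟨ζ, hζ, rfl⟩
    refine hf.mem_stableSet_of_iterate (hπm (hκ1 hζ)) ?_
    rw [hπe ζ (hκ1 hζ)]
    exact hn ⟨ζ, hκ hζ, rfl⟩
  · rw [image_image, ← hκe]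
    exact image_congr fun ζ hζ ↦ hπe ζ (hκ1 hζ)

/-- `G` extends `f^[m]` to the puncture `z₀` as a contraction fixing `z₀`. -/
structure ContractingExtension (f : ℂ → ℂ) (U' U : Set ℂ) (z₀ : ℂ) (m : ℕ) (s : ℝ) (G : ℂ → ℂ) :
    Prop where
  pos : m ≠ 0
  radius_pos : 0 < s
  differentiableOn : DifferentiableOn ℂ G (ball z₀ s)
  apply_self : G z₀ = z₀
  subset : ball z₀ s \ {z₀} ⊆ iterDomain f U' U m
  eqOn : EqOn G f^[m] (ball z₀ s \ {z₀})
  dist_le : ∀ z ∈ ball z₀ s, dist (G z) z₀ ≤ 1 / 2 * dist z z₀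

namespace PowerChart

variable {F h : ℂ → ℂ} {X : Set ℂ} {z₀ : ℂ} {r R s : ℝ} {D : ℕ}

theorem isOpen_image (hc : PowerChart F X z₀ r D R h) {N : Set ℂ} (hN : IsOpen N)
    (hNR : N ⊆ ball 0 R) : IsOpen (h '' N) :=
  isOpen_image_of_injOn isOpen_ball (convex_ball 0 R).isPreconnected hc.differentiableOn hc.injOn
    hN hNR

theorem ball_subset (hc : PowerChart F X z₀ r D R h) (hs : ball z₀ s ⊆ h '' ball 0 R) :
    ball z₀ s \ {z₀} ⊆ X := by
  rintro x ⟨hx, hx0⟩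
  obtain ⟨z, hz, rfl⟩ := hs hx
  exact hc.mapsTo ⟨hz, fun h0 ↦ hx0 (by rw [mem_singleton_iff.1 h0, hc.apply_zero]; rfl)⟩

theorem tendsto (hc : PowerChart F X z₀ r D R h) : Tendsto F (𝓝[≠] z₀) (𝓝 z₀) := by
  rw [Metric.tendsto_nhds]
  intro ε hε
  have hpow : ∀ᶠ z in 𝓝 (0 : ℂ), ‖z ^ D‖ < ε := by
    have : Tendsto (fun z : ℂ ↦ ‖z ^ D‖) (𝓝 0) (𝓝 0) := by
      have := (continuous_pow D (M := ℂ)).norm.tendsto 0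
      simpa [hc.pos] using this
    exact this.eventually_lt_const hε
  obtain ⟨δ, hδ, hδε⟩ := Metric.eventually_nhds_iff_ball.1 hpow
  have hN : h '' (ball 0 R ∩ ball 0 δ) ∈ 𝓝 z₀ :=
    (hc.isOpen_image (isOpen_ball.inter isOpen_ball) inter_subset_left).mem_nhds
      ⟨0, ⟨mem_ball_self hc.radius_pos, mem_ball_self hδ⟩, hc.apply_zero⟩
  filter_upwards [nhdsWithin_le_nhds hN, self_mem_nhdsWithin] with x hx hx0
  obtain ⟨z, ⟨hzR, hzδ⟩, rfl⟩ := hx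
  rw [hc.apply_eq z ⟨hzR, fun h0 ↦ hx0 (by rw [mem_singleton_iff.1 h0, hc.apply_zero]; rfl)⟩]
  simpa using hδε z hzδ

end PowerChart

namespace ExpandingCovering

variable {f : ℂ → ℂ} {U' U : Set ℂ} {ρ : ℂ → ℝ} (hf : ExpandingCovering f U' U ρ)
include hf

/-- A circle around a puncture that is mapped close to the puncture gives a power chart. -/
theorem exists_powerChart {z₀ : ℂ} {r : ℝ} {b₀ : ℂ} (hz : IsPuncture U z₀ r b₀) {m : ℕ} {s : ℝ}
    (hs : 0 < s) (hsr : s < r) (hsub : sphere z₀ s ⊆ iterDomain f U' U m)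
    (hFs : ∀ x ∈ sphere z₀ s, f^[m] x ∈ ball z₀ r) :
    ∃ D R h, PowerChart f^[m] (iterDomain f U' U m) z₀ r D R h ∧ ball z₀ s ⊆ h '' ball 0 R :=
  (hf.iterate m).exists_powerChart (hf.iterDomain_subset m) hz.notMem hz.subset hz.le_dist hs
    (hz.notMem_component _ ⟨by simpa [abs_of_pos hs] using hsr, by simpa using hs.ne'⟩) hsr hsub hFs

theorem exists_contractingExtension {w z₀ : ℂ} (hw : w ∈ stableSet f U') {nk : ℕ → ℕ}
    (hnk : Tendsto nk atTop atTop)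
    (hconv : IteratesTendTo f nk (connectedComponentIn (stableSet f U') w) z₀) {r : ℝ} {b₀ : ℂ}
    (hz : IsPuncture U z₀ r b₀) : ∃ m s G, s < r ∧ ContractingExtension f U' U z₀ m s G := by
  have hr := hz.radius_pos
  obtain ⟨N, hN⟩ := hconv {w} (singleton_subset_iff.2 (mem_connectedComponentIn hw))
    isCompact_singleton (r * Real.exp (-16)) (by positivity)
  obtain ⟨k, hkcirc, hkN⟩ := ((hnk.eventually (hf.eventually_exists_circle hw hz)).and
    (eventually_ge_atTop N)).exists
  have hd := hN k hkN w rfl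
  obtain ⟨K, hK, hKc, hKs⟩ := hkcirc hd
  have hKW : K ⊆ stableSet f U' := hK.trans (connectedComponentIn_subset _ _)
  set s := dist (f^[nk k] w) z₀ with hsdef
  have hs : 0 < s := dist_pos.2 fun h ↦
    hz.notMem (h ▸ hf.stableSet_subset (hf.mapsTo_stableSet _ hw))
  have hsr : s < r := hd.trans <| by
    have : Real.exp (-16) < 1 := Real.exp_lt_one_iff.2 (by norm_num)
    nlinarith
  obtain ⟨N', hN'⟩ := hconv K hK hKc (s / 2) (half_pos hs)
  obtain ⟨l, hlN, hlk⟩ := ((eventually_ge_atTop N').and (hnk.eventually_gt_atTop (nk k))).exists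
  obtain ⟨m, hm⟩ := Nat.exists_eq_add_of_lt hlk
  set M := m + 1
  have hsub : sphere z₀ s ⊆ iterDomain f U' U M := by
    rw [← hKs]
    rintro _ ⟨z, hz, rfl⟩
    exact hf.stableSet_subset_iterDomain _ (hf.mapsTo_stableSet _ (hKW hz))
  have hFs : ∀ x ∈ sphere z₀ s, dist (f^[M] x) z₀ < s / 2 := by
    rw [← hKs]
    rintro _ ⟨z, hz, rfl⟩
    rw [← Function.iterate_add_apply, show M + nk k = nk l by lia]
    exact hN' l hlN z hz
  obtain ⟨D, R, h, hc, hcs⟩ := hf.exists_powerChart hz hs hsr hsub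
    fun x hx ↦ mem_ball.2 ((hFs x hx).trans (by linarith))
  have hDX := hc.ball_subset hcs
  have heq : ∀ z, z ≠ z₀ → Function.update f^[M] z₀ z₀ z = f^[M] z :=
    fun z hz ↦ Function.update_of_ne hz _ _
  set V : Set ℂ := insert z₀ (iterDomain f U' U M) with hV
  have hVz : V ∈ 𝓝 z₀ := mem_of_superset (ball_mem_nhds z₀ hs) fun x hx ↦ by
    by_cases hx0 : x = z₀
    · exact Or.inl hx0
    · exact Or.inr (hDX ⟨hx, hx0⟩)
  have hVd : V \ {z₀} ⊆ iterDomain f U' U M := by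
    rintro x ⟨rfl | hx, hx0⟩
    · exact absurd rfl hx0
    · exact hx
  have hGd : DifferentiableOn ℂ (Function.update f^[M] z₀ z₀) V := by
    refine (Complex.differentiableOn_compl_singleton_and_continuousAt_iff hVz).1
      ⟨((hf.iterate M).differentiableOn.mono hVd).congr fun x hx ↦ heq x hx.2, ?_⟩
    rw [continuousAt_update_same]
    exact hc.tendsto
  have hcl : closedBall z₀ s ⊆ V := by
    intro x hx
    by_cases hx0 : x = z₀
    · exact Or.inl hx0
    · refine Or.inr ?_
      rcases (mem_closedBall.1 hx).eq_or_lt with h1 | h1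
      · exact hsub h1
      · exact hDX ⟨h1, hx0⟩
  have hbd : ∀ z ∈ closedBall z₀ s, ‖Function.update f^[M] z₀ z₀ z - z₀‖ ≤ s / 2 := by
    intro z hz
    refine Complex.norm_le_of_forall_mem_frontier_norm_le (U := ball z₀ s)
      (f := fun z ↦ Function.update f^[M] z₀ z₀ z - z₀) isBounded_ball ?_ ?_
      (by rwa [closure_ball z₀ hs.ne'])
    · refine DifferentiableOn.diffContOnCl ?_
      rw [closure_ball z₀ hs.ne']
      exact (hGd.mono hcl).sub_const z₀
    · intro x hx
      rw [frontier_ball z₀ hs.ne'] at hx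
      rw [heq x (fun h0 ↦ hs.ne' (by rw [← mem_sphere.1 hx, h0, dist_self])), ← dist_eq_norm]
      exact (hFs x hx).le
  have hball := hGd.mono (ball_subset_closedBall.trans hcl)
  refine ⟨M, s, Function.update f^[M] z₀ z₀, hsr, Nat.succ_ne_zero m, hs, hball,
    Function.update_self .., hDX, fun x hx ↦ heq x hx.2, fun x hx ↦ ?_⟩
  have := Complex.dist_le_div_mul_dist_of_mapsTo_ball (R₂ := s / 2) hball (fun z hz ↦ by
    rw [Function.update_self, mem_closedBall, dist_eq_norm]
    exact hbd z (ball_subset_closedBall hz)) hx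
  rwa [Function.update_self, div_right_comm, div_self hs.ne'] at this

end ExpandingCovering

namespace ContractingExtension

variable {f G : ℂ → ℂ} {U' U : Set ℂ} {ρ : ℂ → ℝ} {z₀ : ℂ} {m : ℕ} {s : ℝ}

theorem iterate_mem (hG : ContractingExtension f U' U z₀ m s G) (hf : ExpandingCovering f U' U ρ)
    (hz₀ : z₀ ∉ U) {z : ℂ} (hz : z ∈ ball z₀ s \ {z₀}) (j : ℕ) :
    z ∈ iterDomain f U' U (m * j) ∧ f^[m * j] z ∈ ball z₀ s \ {z₀} ∧
      dist (f^[m * j] z) z₀ ≤ (1 / 2) ^ j * dist z z₀ := by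
  induction j with
  | zero => exact ⟨hf.iterDomain_subset m (hG.subset hz), hz, by simp⟩
  | succ j ih =>
    obtain ⟨h1, h2, h3⟩ := ih
    have h4 := hG.dist_le _ h2.1
    rw [hG.eqOn h2, ← Function.iterate_add_apply, show m + m * j = m * (j + 1) by ring] at h4
    have h5 : z ∈ iterDomain f U' U (m * (j + 1)) := by
      rw [show m * (j + 1) = m + m * j by ring]
      exact hf.mem_iterDomain_add h1 (hG.subset h2)
    refine ⟨h5, ⟨mem_ball.2 ?_, fun h ↦ hz₀ (mem_singleton_iff.1 h ▸ (hf.iterate _).mapsTo h5)⟩, ?_⟩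
    · linarith [mem_ball.1 h2.1, dist_nonneg (x := f^[m * j] z) (y := z₀)]
    · rw [pow_succ]
      linarith

theorem subset_stableSet (hG : ContractingExtension f U' U z₀ m s G)
    (hf : ExpandingCovering f U' U ρ) (hz₀ : z₀ ∉ U) : ball z₀ s \ {z₀} ⊆ stableSet f U' := by
  refine hf.subset_stableSet (isOpen_ball.sdiff isClosed_singleton)
    (Eventually.of_forall fun n z hz ↦ ?_)
  exact hf.iterDomain_anti (Nat.le_mul_of_pos_left n (Nat.pos_of_ne_zero hG.pos))
    (hG.iterate_mem hf hz₀ hz n).1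

/-- The fixed point at the puncture is superattracting. -/
theorem deriv_eq_zero (hG : ContractingExtension f U' U z₀ m s G)
    (hf : ExpandingCovering f U' U ρ) (hz₀ : z₀ ∉ U) : deriv G z₀ = 0 := by
  by_contra hne
  set τ : ℂ := 2 * Real.pi * Complex.I with hτ
  have hτre : τ.re = 0 := by simp [hτ]
  have hs := hG.radius_pos
  set H := expHalfPlane s
  have hHc : Convex ℝ H := convex_expHalfPlane s
  have hHo : IsOpen H := isOpen_expHalfPlane s
  set e : ℂ → ℂ := fun ζ ↦ z₀ + Complex.exp ζ with he
  have hed : Differentiable ℂ e := Complex.differentiable_exp.const_add z₀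
  have heD : MapsTo e H (ball z₀ s \ {z₀}) := fun ζ hζ ↦ add_const_exp_mem hs hζ
  have hDm : MapsTo G (ball z₀ s \ {z₀}) (ball z₀ s \ {z₀}) := fun z hz ↦ by
    have := (hG.iterate_mem hf hz₀ hz 1).2.1
    rw [mul_one] at this
    rwa [hG.eqOn hz]
  have hmem : z₀ ∈ ball z₀ s := mem_ball_self hs
  have hsl : ∀ z ∈ ball z₀ s, dslope G z₀ z ≠ 0 := by
    intro z hz
    by_cases h0 : z = z₀
    · rwa [h0, dslope_same]
    · rw [dslope_of_ne _ h0, slope_def_field, hG.apply_self]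
      exact div_ne_zero (sub_ne_zero.2 (hDm ⟨hz, h0⟩).2) (sub_ne_zero.2 h0)
  obtain ⟨q, hq, -, hqe⟩ := LiftsHol.exists_log (convex_ball z₀ s) isOpen_ball
    ((Complex.differentiableOn_dslope (ball_mem_nhds z₀ hs)).2 hG.differentiableOn) hsl hmem
    (Complex.exp_log (hsl _ hmem))
  set T : ℂ → ℂ := fun ζ ↦ ζ + q (e ζ) with hT
  have hTe : ∀ ζ ∈ H, e (T ζ) = G (e ζ) := by
    intro ζ hζ
    have hne' : e ζ ≠ z₀ := (heD hζ).2
    have hsub : e ζ - z₀ = Complex.exp ζ := by simp [he]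
    rw [show e (T ζ) = z₀ + Complex.exp (ζ + q (e ζ)) from rfl, Complex.exp_add,
      hqe _ (heD hζ).1, dslope_of_ne _ hne', slope_def_field, hG.apply_self, hsub,
      mul_div_cancel₀ _ (Complex.exp_ne_zero ζ)]
    ring
  have hTH : MapsTo T H H := by
    intro ζ hζ
    have h1 := (hDm (heD hζ)).1
    rw [← hTe ζ hζ, mem_ball, dist_eq_norm] at h1
    rw [mem_expHalfPlane hs]
    simpa [he] using h1
  have hTc : ContinuousOn T H := continuousOn_id.add
    (hq.continuousOn.comp hed.continuous.continuousOn fun ζ hζ ↦ (heD hζ).1)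
  have hTτ : ∀ ζ, T (ζ + τ) = T ζ + τ := by
    intro ζ
    have : e (ζ + τ) = e ζ := by simp only [he, hτ, Complex.exp_periodic ζ]
    simp only [hT, this]
    ring
  have hTj : ∀ j, MapsTo T^[j] H H := fun j ↦ hTH.iterate j
  have hTjτ : ∀ j ζ, T^[j] (ζ + τ) = T^[j] ζ + τ := by
    intro j
    induction j with
    | zero => simp
    | succ j ih => intro ζ; rw [Function.iterate_succ_apply, hTτ, ih, Function.iterate_succ_apply]
  have hTje : ∀ j, ∀ ζ ∈ H, e (T^[j] ζ) = f^[m * j] (e ζ) := by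
    intro j ζ hζ
    induction j with
    | zero => simp
    | succ j ih =>
      rw [Function.iterate_succ_apply', hTe _ (hTj j hζ), hG.eqOn (heD (hTj j hζ)), ih,
        ← Function.iterate_add_apply, show m + m * j = m * (j + 1) by ring]
  set ζ₀ : ℂ := ((Real.log s - 1 : ℝ) : ℂ) with hζ₀
  have hζ₀H : ζ₀ ∈ H := by
    change ζ₀.re < Real.log s
    rw [hζ₀, Complex.ofReal_re]
    linarith
  have hζ₁H : ζ₀ + τ ∈ H := add_mem_expHalfPlane hζ₀H hτre
  have hDU : ball z₀ s \ {z₀} ⊆ U := hG.subset.trans (hf.iterDomain_subset m)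
  have h0 : (0 : ℂ) ∈ ball (0 : ℂ) 1 := mem_ball_self one_pos
  obtain ⟨π₀, hπ₀⟩ := hf.density.exists_centeredCover hf.isOpen (hDU (heD hζ₀H))
  obtain ⟨θ, hθd, hθm, hθ0, hθe⟩ := hπ₀.liftsHol.exists_lift H hHc hHo e hed.differentiableOn
    (heD.mono_right hDU) ζ₀ hζ₀H 0 h0 hπ₀.apply_zero
  suffices hzero : θ (ζ₀ + τ) = 0 by
    have hne' : ∀ ζ ∈ ball (0 : ℂ) 1, π₀ ζ - z₀ ≠ 0 := fun ζ hζ h ↦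
      hz₀ (sub_eq_zero.1 h ▸ hπ₀.liftsHol.mapsTo hζ)
    obtain ⟨L, hL, -, hLe⟩ := LiftsHol.exists_log (convex_ball 0 1) isOpen_ball
      (hπ₀.liftsHol.differentiableOn.sub_const z₀) hne' h0 (Complex.exp_log (hne' _ h0))
    have := sub_eq_sub_of_exp_eq hHc.isPreconnected (A₁ := L ∘ θ) (A₂ := id)
      (hL.continuousOn.comp hθd.continuousOn hθm) continuousOn_id
      (fun ζ hζ ↦ by rw [Function.comp, hLe _ (hθm hζ), hθe ζ hζ]; simp [he]) hζ₀H hζ₁H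
    simp only [Function.comp, hzero, hθ0, id] at this
    exact Complex.two_pi_I_ne_zero (by rw [← hτ]; linear_combination -this)
  have hest : ∀ j : ℕ, 2 * Real.pi < j * Real.log 2 →
      ‖θ (ζ₀ + τ)‖ ≤ 1 / (j * Real.log 2) * (2 * Real.pi) := by
    intro j hj
    have hw := (hG.iterate_mem hf hz₀ (heD hζ₀H) j).1
    set S := T^[j] ζ₀ with hS
    have hSH : S ∈ H := hTj j hζ₀H
    have hSe : e S = f^[m * j] (e ζ₀) := hTje j ζ₀ hζ₀H
    obtain ⟨ψ, hψ⟩ := hf.density.exists_centeredCover hf.isOpen ((hf.iterate (m * j)).mapsTo hw)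
    obtain ⟨α, hαd, hαm, hα0, hαe⟩ := hψ.liftsHol.exists_lift H hHc hHo e hed.differentiableOn
      (heD.mono_right hDU) S hSH 0 h0 (by rw [hψ.apply_zero, hSe])
    obtain ⟨π, hπd, hπm, hπ0, hπe⟩ := hf.exists_centered_lift hw hψ
    obtain ⟨φ, hφd, hφm, hφ0, hφe⟩ := hπ₀.liftsHol.exists_disc_lift hπd
      (hπm.mono_right (hf.iterDomain_subset _)) h0 (by rw [hπ₀.apply_zero, hπ0])
    have hαT : ContinuousOn (α ∘ T^[j]) H :=
      hαd.continuousOn.comp (hTc.iterate hTH j) (hTj j)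
    have hαTm : MapsTo (α ∘ T^[j]) H (ball 0 1) := hαm.comp (hTj j)
    have h1 : EqOn (π ∘ α ∘ T^[j]) e H := by
      refine (hf.iterate (m * j)).eqOn H hHc.isPreconnected _ _ (hπd.continuousOn.comp hαT hαTm)
        hed.continuous.continuousOn (hπm.comp hαTm)
        (fun ζ hζ ↦ (hG.iterate_mem hf hz₀ (heD hζ) j).1) (fun ζ hζ ↦ ?_) ζ₀ hζ₀H ?_
      · rw [Function.comp, hπe _ (hαTm hζ), Function.comp, hαe _ (hTj j hζ), hTje j ζ hζ]
      · simp only [Function.comp, ← hS, hα0, hπ0]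
    have h2 : EqOn (φ ∘ α ∘ T^[j]) θ H := by
      refine hπ₀.liftsHol.eqOn H hHc.isPreconnected _ _ (hφd.continuousOn.comp hαT hαTm)
        hθd.continuousOn (hφm.comp hαTm) hθm (fun ζ hζ ↦ ?_) ζ₀ hζ₀H ?_
      · rw [Function.comp, hφe _ (hαTm hζ), hθe ζ hζ]
        exact h1 hζ
      · simp only [Function.comp, ← hS, hα0, hφ0, hθ0]
    have hSre : S.re + j * Real.log 2 ≤ Real.log s := by
      have h3 := (hG.iterate_mem hf hz₀ (heD hζ₀H) j).2.2
      rw [← hSe, dist_eq_norm, dist_eq_norm] at h3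
      simp only [he, add_sub_cancel_left, Complex.norm_exp, hζ₀, Complex.ofReal_re] at h3
      have h4 := Real.log_le_log (Real.exp_pos _) h3
      rw [Real.log_exp, Real.log_mul (by positivity) (Real.exp_pos _).ne', Real.log_exp,
        Real.log_pow, one_div, Real.log_inv] at h4
      linarith
    have hτn : ‖τ‖ = 2 * Real.pi := by
      simp [hτ, abs_of_pos Real.pi_pos]
    have hball : ball S (j * Real.log 2) ⊆ H := by
      intro ζ hζ
      have h1 := (Complex.abs_re_le_norm (ζ - S)).trans_lt (mem_ball_iff_norm.1 hζ)
      rw [Complex.sub_re, abs_lt] at h1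
      change ζ.re < Real.log s
      linarith
    have h5 := Complex.dist_le_div_mul_dist_of_mapsTo_ball (R₂ := 1)
      (hαd.mono hball) (by
        rw [hα0]
        exact (hαm.mono_left hball).mono_right ball_subset_closedBall)
      (show S + τ ∈ ball S (j * Real.log 2) by simpa [hτn] using hj)
    rw [hα0, dist_zero_right, dist_self_add_left, hτn] at h5
    have h6 := h2 hζ₁H
    simp only [Function.comp, hTjτ, ← hS] at h6
    rw [← h6]
    refine (Complex.norm_le_norm_of_mapsTo_ball hφd (hφm.mono_right ball_subset_closedBall) hφ0 ?_).trans h5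
    simpa using hαm (add_mem_expHalfPlane hSH hτre)
  by_contra hpos
  replace hpos := norm_pos_iff.2 hpos
  obtain ⟨j, hj⟩ := exists_nat_gt ((2 * Real.pi + 2 * Real.pi / ‖θ (ζ₀ + τ)‖) / Real.log 2)
  rw [div_lt_iff₀ (Real.log_pos one_lt_two)] at hj
  have hp : 0 < 2 * Real.pi / ‖θ (ζ₀ + τ)‖ := div_pos (by positivity) hpos
  have hj0 : 0 < j * Real.log 2 := by linarith [Real.pi_pos]
  have h7 := hest j (by linarith)
  have h8 : 2 * Real.pi / ‖θ (ζ₀ + τ)‖ < j * Real.log 2 := by linarith [Real.pi_pos]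
  rw [div_lt_iff₀ hpos] at h8
  rw [div_mul_eq_mul_div, one_mul, le_div_iff₀ hj0] at h7
  linarith

end ContractingExtension

theorem PowerChart.isSimplyConnected_image {F : ℂ → ℂ} {X : Set ℂ} {z₀ : ℂ} {r R : ℝ} {D : ℕ}
    {h : ℂ → ℂ} (hc : PowerChart F X z₀ r D R h) : IsSimplyConnected (h '' ball 0 R) := by
  have : ContractibleSpace (ball (0 : ℂ) R) :=
    (convex_ball _ _).contractibleSpace ⟨0, mem_ball_self hc.radius_pos⟩
  have hemb : IsOpenEmbedding ((ball (0 : ℂ) R).domRestrict h) := by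
    refine .of_continuous_injective_isOpenMap
      (continuousOn_iff_continuous_domRestrict.1 hc.differentiableOn.continuousOn)
      (injOn_iff_injective.1 hc.injOn) fun N hN ↦ ?_
    have := hc.isOpen_image (isOpen_ball.isOpenMap_subtype_val N hN) (by simp)
    rwa [image_image] at this
  have hcon := hemb.isEmbedding.toHomeomorph.symm.contractibleSpace
  rw [range_domRestrict] at hcon
  exact inferInstanceAs (SimplyConnectedSpace (h '' ball 0 R))

/-- The image of a power chart is relatively closed in the part of `X` that `F` maps to the
punctured disc. -/
theorem PowerChart.mem_image_of_mem_closure {F : ℂ → ℂ} {X Y : Set ℂ} {z₀ : ℂ} {r R : ℝ} {D : ℕ}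
    {h : ℂ → ℂ} (hc : PowerChart F X z₀ r D R h) (hF : LiftsHol F X Y) (hz₀ : z₀ ∉ X) {y : ℂ}
    (hy : y ∈ X) (hFy : F y ∈ ball z₀ r \ {z₀}) (hcl : y ∈ closure (h '' ball 0 R)) :
    y ∈ h '' ball 0 R := by
  have hopen : IsOpen (X ∩ F ⁻¹' (ball z₀ r \ {z₀})) :=
    hF.differentiableOn.continuousOn.isOpen_inter_preimage hF.isOpen
      (isOpen_ball.sdiff isClosed_singleton)
  obtain ⟨ε, hε, hN⟩ := Metric.isOpen_iff.1 hopen y ⟨hy, hFy⟩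
  obtain ⟨v, hvN, z, hz, rfl⟩ := mem_closure_iff.1 hcl _ isOpen_ball (mem_ball_self hε)
  have hz0 : z ≠ 0 := by
    rintro rfl
    exact hz₀ (hc.apply_zero ▸ (hN hvN).1)
  have hD : (D : ℂ) ≠ 0 := Nat.cast_ne_zero.2 hc.pos
  obtain ⟨q, hq, hqv, hqe⟩ := LiftsHol.exists_log (convex_ball y ε) isOpen_ball
    ((hF.differentiableOn.mono fun t ht ↦ (hN ht).1).sub_const z₀)
    (fun t ht ↦ sub_ne_zero.2 (hN ht).2.2) hvN (x := D * Complex.log z) (by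
      rw [Complex.exp_nat_mul, Complex.exp_log hz0, hc.apply_eq z ⟨hz, hz0⟩, add_sub_cancel_left])
  set root : ℂ → ℂ := fun t ↦ Complex.exp (q t / D) with hroot
  have hrootD : ∀ t ∈ ball y ε, root t ^ D = F t - z₀ := fun t ht ↦ by
    rw [hroot, ← Complex.exp_nat_mul, mul_div_cancel₀ _ hD, hqe t ht]
  have hrootm : MapsTo root (ball y ε) (ball 0 R \ {0}) := fun t ht ↦ by
    refine ⟨mem_ball_zero_iff.2 ?_, Complex.exp_ne_zero _⟩
    rw [← pow_lt_pow_iff_left₀ (norm_nonneg _) hc.radius_pos.le hc.pos, ← norm_pow, hrootD t ht,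
      hc.radius_pow, ← dist_eq_norm]
    exact (hN ht).2.1
  have hrootc : ContinuousOn root (ball y ε) :=
    Complex.continuous_exp.comp_continuousOn (hq.continuousOn.div_const _)
  have heq := hF.eqOn (ball y ε) (convex_ball y ε).isPreconnected (fun t ↦ h (root t)) id
    (hc.differentiableOn.continuousOn.comp hrootc fun t ht ↦ (hrootm ht).1) continuousOn_id
    (fun t ht ↦ hc.mapsTo (hrootm ht)) (fun t ht ↦ (hN ht).1)
    (fun t ht ↦ by rw [hc.apply_eq _ (hrootm ht), hrootD t ht, add_sub_cancel, id])
    (h z) hvN (by simp [hroot, hqv, mul_div_cancel_left₀ _ hD, Complex.exp_log hz0])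
  exact ⟨root y, (hrootm (mem_ball_self hε)).1, heq (mem_ball_self hε)⟩

namespace ExpandingCovering

variable {f : ℂ → ℂ} {U' U : Set ℂ} {ρ : ℂ → ℝ} (hf : ExpandingCovering f U' U ρ)
include hf

/-- Iterates of `f` map components of the stable set onto components. -/
theorem image_connectedComponentIn {w : ℂ} (hw : w ∈ stableSet f U') (n : ℕ) :
    f^[n] '' connectedComponentIn (stableSet f U') w =
      connectedComponentIn (stableSet f U') (f^[n] w) := by
  set 𝒲 := stableSet f U'
  have hW : connectedComponentIn 𝒲 w ⊆ iterDomain f U' U n :=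
    (connectedComponentIn_subset _ _).trans (hf.stableSet_subset_iterDomain n)
  have hwA : f^[n] w ∈ f^[n] '' connectedComponentIn 𝒲 w :=
    mem_image_of_mem _ (mem_connectedComponentIn hw)
  have hwm := hf.mapsTo_stableSet n hw
  apply subset_antisymm
  · refine (isPreconnected_connectedComponentIn.image _
      ((hf.iterate n).differentiableOn.continuousOn.mono hW)).subset_connectedComponentIn hwA ?_
    exact image_subset_iff.2 fun z hz ↦ hf.mapsTo_stableSet n (connectedComponentIn_subset _ _ hz)
  · refine isPreconnected_connectedComponentIn.subset_of_closure_inter_subset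
      ((hf.iterate n).isOpen_image hf.isOpen isOpen_stableSet.connectedComponentIn hW)
      ⟨_, mem_connectedComponentIn hwm, hwA⟩ ?_
    rintro y ⟨hcl, hy⟩
    obtain ⟨ε, hε, hN⟩ := Metric.isOpen_iff.1 isOpen_stableSet y (connectedComponentIn_subset _ _ hy)
    obtain ⟨v, hvN, x, hx, rfl⟩ := mem_closure_iff.1 hcl _ isOpen_ball (mem_ball_self hε)
    obtain ⟨G, hG, hGm, hGx, hGe⟩ := (hf.iterate n).exists_lift (ball y ε) (convex_ball y ε)
      isOpen_ball id differentiableOn_id (fun t ht ↦ hf.stableSet_subset (hN ht)) _ hvN x (hW hx) rfl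
    have h1 : G '' ball y ε ⊆ connectedComponentIn 𝒲 x := by
      refine ((convex_ball y ε).isPreconnected.image _ hG.continuousOn).subset_connectedComponentIn
        ⟨_, hvN, hGx⟩ (image_subset_iff.2 fun t ht ↦ hf.mem_stableSet_of_iterate (hGm ht) ?_)
      rw [hGe t ht]
      exact hN ht
    rw [← connectedComponentIn_eq hx] at h1
    exact ⟨G y, h1 (mem_image_of_mem _ (mem_ball_self hε)), hGe y (mem_ball_self hε)⟩

theorem iteratesTendTo_image {w z₀ : ℂ} (hw : w ∈ stableSet f U') {nk : ℕ → ℕ}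
    (hnk : Tendsto nk atTop atTop)
    (hconv : IteratesTendTo f nk (connectedComponentIn (stableSet f U') w) z₀) (n : ℕ) :
    IteratesTendTo f (fun l ↦ nk l - n) (connectedComponentIn (stableSet f U') (f^[n] w)) z₀ := by
  intro K hK hKc ε hε
  refine hKc.induction_on (p := fun K ↦ ∃ N, ∀ k ≥ N, ∀ z ∈ K, dist (f^[nk k - n] z) z₀ < ε)
    ⟨0, by simp⟩ (fun s t hst ⟨N, hN⟩ ↦ ⟨N, fun k hk z hz ↦ hN k hk z (hst hz)⟩)
    (fun s t ⟨N, hN⟩ ⟨M, hM⟩ ↦ ⟨max N M, fun k hk z hz ↦ hz.elim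
      (hN k (le_of_max_le_left hk) z) (hM k (le_of_max_le_right hk) z)⟩) fun y hy ↦ ?_
  have hyW := hK hy
  rw [← hf.image_connectedComponentIn hw n] at hyW
  obtain ⟨x, hx, rfl⟩ := hyW
  obtain ⟨δ, hδ, hδW⟩ := Metric.nhds_basis_closedBall.mem_iff.1
    (isOpen_stableSet.connectedComponentIn.mem_nhds hx)
  obtain ⟨N, hN⟩ := hconv _ hδW (isCompact_closedBall x δ) ε hε
  obtain ⟨M, hM⟩ := eventually_atTop.1 (hnk.eventually_ge_atTop n)
  have hopen := (hf.iterate n).isOpen_image hf.isOpen isOpen_ball (ball_subset_closedBall.trans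
    (hδW.trans ((connectedComponentIn_subset _ _).trans (hf.stableSet_subset_iterDomain n))))
  refine ⟨f^[n] '' ball x δ,
    mem_nhdsWithin_of_mem_nhds (hopen.mem_nhds (mem_image_of_mem _ (mem_ball_self hδ))),
    max N M, ?_⟩
  rintro k hk _ ⟨z, hz, rfl⟩
  rw [← Function.iterate_add_apply, Nat.sub_add_cancel (hM k (le_of_max_le_right hk))]
  exact hN k (le_of_max_le_left hk) z (ball_subset_closedBall hz)

theorem isSimplyConnected_of_iteratesTendTo {z₀ b₀ : ℂ} {s : ℝ} (hz : IsPuncture U z₀ s b₀)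
    (hs𝒲 : ball z₀ s \ {z₀} ⊆ stableSet f U') {a : ℂ} (ha : a ∈ ball z₀ s \ {z₀}) {nk : ℕ → ℕ}
    (hconv : IteratesTendTo f nk (connectedComponentIn (stableSet f U') a) z₀) :
    IsSimplyConnected (connectedComponentIn (stableSet f U') a ∪ {z₀}) := by
  have hs := hz.radius_pos
  set 𝒲 := stableSet f U'
  set W := connectedComponentIn 𝒲 a
  have hWo : IsOpen W := isOpen_stableSet.connectedComponentIn
  have hpunc : ball z₀ s \ {z₀} ⊆ W :=
    (isPreconnected_punctured_ball hs).subset_connectedComponentIn ha hs𝒲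
  have hmem : z₀ ∈ ball z₀ s := mem_ball_self hs
  have hΩ : W ∪ {z₀} = W ∪ ball z₀ s := by
    refine subset_antisymm (union_subset_union_right _ (singleton_subset_iff.2 hmem))
      (union_subset subset_union_left fun z hz' ↦ ?_)
    by_cases h0 : z = z₀
    · exact .inr h0
    · exact .inl (hpunc ⟨hz', h0⟩)
  have hΩo : IsOpen (W ∪ {z₀}) := hΩ ▸ hWo.union isOpen_ball
  have hΩc : IsPathConnected (W ∪ {z₀}) := by
    refine hΩo.isConnected_iff_isPathConnected.1 ⟨⟨z₀, .inr rfl⟩, ?_⟩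
    rw [hΩ]
    exact isPreconnected_connectedComponentIn.union a (mem_connectedComponentIn (hs𝒲 ha)) ha.1
      (convex_ball _ _).isPreconnected
  refine isSimplyConnected_iff_exists_homotopy_refl_forall_mem.2 ⟨hΩc, fun x p hp ↦ ?_⟩
  obtain ⟨γ, hγ⟩ := hΩc.joinedIn x (p.source ▸ hp 0) z₀ (.inr rfl)
  set K := range p ∪ range γ
  have hKΩ : K ⊆ W ∪ {z₀} := union_subset (range_subset_iff.2 hp) (range_subset_iff.2 hγ)
  have hKc : IsCompact K := (isCompact_range p.continuous).union (isCompact_range γ.continuous)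
  have hK : IsPreconnected K := (isPreconnected_range p.continuous).union x ⟨0, p.source⟩
    ⟨0, γ.source⟩ (isPreconnected_range γ.continuous)
  have hs2 : 0 < s / 2 := by positivity
  have hsub2 : ball z₀ (s / 2) ⊆ ball z₀ s := ball_subset_ball (by linarith)
  have hsph : sphere z₀ (s / 2) ⊆ W := fun y hy ↦ by
    rw [mem_sphere] at hy
    refine hpunc ⟨mem_ball.2 (by linarith), ?_⟩
    rintro rfl
    rw [dist_self] at hy
    exact hs2.ne hy
  obtain ⟨l, hl⟩ := hconv (K \ ball z₀ (s / 2) ∪ sphere z₀ (s / 2))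
    (union_subset (fun y hy ↦ (hKΩ hy.1).resolve_right fun h0 ↦
      hy.2 (mem_singleton_iff.1 h0 ▸ mem_ball_self hs2)) hsph)
    ((hKc.diff isOpen_ball).union (isCompact_sphere _ _)) s hs
  replace hl := hl l le_rfl
  set m := nk l
  have hWm : W ⊆ iterDomain f U' U m :=
    (connectedComponentIn_subset _ _).trans (hf.stableSet_subset_iterDomain m)
  obtain ⟨D, R, h, hc, hsh⟩ := hf.exists_powerChart hz hs2 (by linarith) (hsph.trans hWm)
    fun y hy ↦ hl y (.inr hy)
  have hR := hc.radius_pos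
  have hz₀m : z₀ ∉ iterDomain f U' U m := fun h0 ↦ hz.notMem (hf.iterDomain_subset m h0)
  have hhΩ : h '' ball 0 R ⊆ W ∪ {z₀} := by
    have ha₂ : z₀ + (s / 4 : ℝ) ∈ ball z₀ (s / 2) \ {z₀} := by
      refine ⟨?_, by simpa using hs.ne'⟩
      rw [mem_ball, dist_eq_norm, add_sub_cancel_left, Complex.norm_real,
        Real.norm_of_nonneg (by positivity)]
      linarith
    obtain ⟨y, hyR, hy⟩ := hsh ha₂.1
    have hy0 : y ∈ ball 0 R \ {0} :=
      ⟨hyR, fun h0 ↦ ha₂.2 (by rw [← hy, mem_singleton_iff.1 h0, hc.apply_zero]; rfl)⟩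
    have h1 : h '' (ball 0 R \ {0}) ⊆ connectedComponentIn 𝒲 (h y) := by
      refine ((isPreconnected_punctured_ball hR).image _ (hc.differentiableOn.continuousOn.mono
        sdiff_subset)).subset_connectedComponentIn (mem_image_of_mem _ hy0)
        (image_subset_iff.2 fun z hz' ↦ hf.mem_stableSet_of_iterate (hc.mapsTo hz') (hs𝒲 ?_))
      rw [hc.apply_eq z hz']
      refine ⟨?_, by simpa [hc.pos] using hz'.2⟩
      rw [mem_ball, dist_eq_norm, add_sub_cancel_left, norm_pow, ← hc.radius_pow]
      exact pow_lt_pow_left₀ (mem_ball_zero_iff.1 hz'.1) (norm_nonneg _) hc.pos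
    rw [hy, ← connectedComponentIn_eq (hpunc ⟨hsub2 ha₂.1, ha₂.2⟩)] at h1
    rintro _ ⟨z, hz', rfl⟩
    by_cases h0 : z = 0
    · exact .inr (h0 ▸ hc.apply_zero)
    · exact .inl (h1 (mem_image_of_mem _ ⟨hz', h0⟩))
  have hKh : K ⊆ h '' ball 0 R := by
    refine hK.subset_of_closure_inter_subset (hc.isOpen_image isOpen_ball subset_rfl)
      ⟨z₀, .inr ⟨1, γ.target⟩, 0, mem_ball_self hR, hc.apply_zero⟩ ?_
    rintro y ⟨hcl, hyK⟩
    by_cases hyb : y ∈ ball z₀ (s / 2)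
    · exact hsh hyb
    have hyW : y ∈ W := (hKΩ hyK).resolve_right fun h0 ↦
      hyb (mem_singleton_iff.1 h0 ▸ mem_ball_self hs2)
    exact hc.mem_image_of_mem_closure (hf.iterate m) hz₀m (hWm hyW)
      ⟨hl y (.inl ⟨hyK, hyb⟩), fun h0 ↦
        hz.notMem (mem_singleton_iff.1 h0 ▸ (hf.iterate m).mapsTo (hWm hyW))⟩ hcl
  obtain ⟨H, hH⟩ := (isSimplyConnected_iff_exists_homotopy_refl_forall_mem.1
    hc.isSimplyConnected_image).2 x p fun t ↦ hKh (.inl ⟨t, rfl⟩)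
  exact ⟨H, fun t ↦ hhΩ (hH t)⟩

end ExpandingCovering

/-- **Theorem (Statement 16).** Let `U' ⊆ U ⊆ ℂ` be hyperbolic open sets, `f : U' → U` a
holomorphic covering map, and let `𝒲` be the set of points of `U'` having a neighborhood whose
whole forward orbit stays in `U'`. Then (1) `d_U(fⁿ(w), U∖𝒲) → ∞` for every `w ∈ 𝒲`; and
(2) if `W` is the component of `𝒲` containing `w` and `f^{n_k}|_W → z₀` locally uniformly,
then `z₀ ∉ U`, and if moreover `z₀` is an isolated point of `ℂ∖U`, then `f^{n_k}(W) ∪ {z₀}`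
is simply connected for large `k` and some iterate `f^p` extends holomorphically to `z₀` with
a superattracting fixed point there. -/
theorem maximal_expansion_theorem
    (U U' : Set ℂ)
    (hU : HyperbolicOpen U) (hU' : HyperbolicOpen U') (hsub : U' ⊆ U)
    (f : ℂ → ℂ)
    (hfhol : DifferentiableOn ℂ f U')
    (hcov : ∃ h : MapsTo f U' U, IsCoveringMap (MapsTo.restrict f U' U h))
    (hsurj : f '' U' = U)
    (ρ : ℂ → ℝ) (hρ : IsHypDensity U ρ)
    (𝒲 : Set ℂ)
    (h𝒲 : 𝒲 = {z : ℂ | z ∈ U' ∧ ∃ N : Set ℂ, IsOpen N ∧ z ∈ N ∧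
      ∀ n : ℕ, f^[n] '' N ⊆ U'}) :
    (∀ w ∈ 𝒲,
      Tendsto (fun m : ℕ => hypDistToSet U ρ (f^[m] w) (U \ 𝒲)) atTop (𝓝 ⊤)) ∧
    (∀ w ∈ 𝒲, ∀ W : Set ℂ, W = connectedComponentIn 𝒲 w →
      ∀ nk : ℕ → ℕ, Tendsto nk atTop atTop →
      ∀ z₀ : ℂ,
        (∀ K : Set ℂ, K ⊆ W → IsCompact K → ∀ ε > (0 : ℝ), ∃ N : ℕ, ∀ k ≥ N, ∀ z ∈ K,
          dist (f^[nk k] z) z₀ < ε) →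
        z₀ ∉ U ∧
        ((∃ N ∈ 𝓝 z₀, N ∩ Uᶜ = {z₀}) →
          (∃ K₀ : ℕ, ∀ k ≥ K₀, SimplyConnectedSpace ↥(f^[nk k] '' W ∪ {z₀})) ∧
          ∃ p : ℕ, 1 ≤ p ∧ ∃ g : ℂ → ℂ, AnalyticAt ℂ g z₀ ∧ g z₀ = z₀ ∧
            deriv g z₀ = 0 ∧ ∀ᶠ z in 𝓝[≠] z₀, g z = f^[p] z)) := by
  subst h𝒲
  obtain ⟨hmaps, hcov⟩ := hcov
  have hf : ExpandingCovering f U' U ρ :=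
    ⟨hU.1, hsub, liftsHol_of_isCoveringMap hU'.1 hU.1 hcov hfhol, hρ⟩
  refine ⟨fun w hw ↦ hf.tendsto_hypDistToSet hw, ?_⟩
  rintro w hw _ rfl nk hnk z₀ hconv
  refine ⟨hf.notMem_of_iteratesTendTo hw hconv, fun hiso ↦ ?_⟩
  obtain ⟨r, b₀, hz⟩ := hU.exists_isPuncture hiso
  obtain ⟨m, s, G, hsr, hG⟩ := hf.exists_contractingExtension hw hnk hconv hz
  have hs := hG.radius_pos
  have hball : ball z₀ s ∈ 𝓝 z₀ := ball_mem_nhds z₀ hs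
  have hsub' : ball z₀ s \ {z₀} ⊆ ball z₀ r \ {z₀} :=
    sdiff_subset_sdiff_left (ball_subset_ball hsr.le)
  have hz' : IsPuncture U z₀ s b₀ := ⟨hz.notMem, hs, hsub'.trans hz.subset,
    hsr.le.trans hz.le_dist, fun z hzs ↦ hz.notMem_component z (hsub' hzs)⟩
  refine ⟨?_, m, Nat.one_le_iff_ne_zero.2 hG.pos, G, hG.differentiableOn.analyticAt hball,
    hG.apply_self, hG.deriv_eq_zero hf hz.notMem, ?_⟩
  · obtain ⟨K₀, hK₀⟩ := hconv {w} (singleton_subset_iff.2 (mem_connectedComponentIn hw))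
      isCompact_singleton s hs
    refine ⟨K₀, fun k hk ↦ ?_⟩
    have hwk : f^[nk k] w ∈ ball z₀ s \ {z₀} := ⟨hK₀ k hk w rfl, fun h0 ↦
      hz.notMem (mem_singleton_iff.1 h0 ▸ hf.stableSet_subset (hf.mapsTo_stableSet (nk k) hw))⟩
    have := hf.isSimplyConnected_of_iteratesTendTo hz' (hG.subset_stableSet hf hz.notMem) hwk
      (hf.iteratesTendTo_image hw hnk hconv (nk k))
    rw [← hf.image_connectedComponentIn hw] at this
    exact this
  · filter_upwards [mem_nhdsWithin_of_mem_nhds hball, self_mem_nhdsWithin] with z hzs hz0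
    exact hG.eqOn ⟨hzs, hz0⟩
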